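/- arXiv:2504.10091 — 2 statements merged into one kernel-verified Lean document; each statement's English description precedes it below -/
import Mathlib

section
/- (Existence of weak measure solutions.) Let f₀ be a probability measure on ℝ^d with finite first moment, b a probability measure on Θ with bounded support, and 𝒞 satisfy the Lipschitz and linear growth conditions of the paper. Fix T > 0. Then there exists f ∈ C([0,T], P₁(ℝ^d)) with f(0) = f₀ which is a weak measure solution of the Boltzmann-type equation ∂_t f = Q(f,f): for every test function φ ∈ C_c^∞(ℝ^d) and almost every t ∈ [0,T], (d/dt) ∫ φ(v) f(t,dv) = (1/2) ∫∫∫ b(dθ) (φ(𝒞(v,v*,θ)) + φ(𝒞(v*,v,θ)) − φ(v) − φ(v*)) f(t,dv) f(t,dv*). Moreover f is obtained as the uniform-in-time Wasserstein-1 limit of the piecewise-linear forward Euler interpolants f^{Δt_k} with Δt_k = T/2^k. -/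
open MeasureTheory ProbabilityTheory Set
open scoped ENNReal

noncomputable section

/-- `Vec d` is the Euclidean space `ℝ^d`. -/
abbrev Vec (d : ℕ) := EuclideanSpace ℝ (Fin d)

/-- Wasserstein-1 distance between two measures, defined as the infimum of
transport costs over all couplings. -/
noncomputable def W1 {E : Type*} [MeasurableSpace E] [NormedAddCommGroup E]
    (μ ν : Measure E) : ℝ :=
  sInf { c : ℝ | ∃ γ : Measure (E × E),
    γ.map Prod.fst = μ ∧ γ.map Prod.snd = ν ∧ c = ∫ p, ‖p.1 - p.2‖ ∂γ }

/-- Gain part `Q⁺(f,g) = 𝒞_#(f ⊗ g ⊗ b)` of the collisional operator. -/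
noncomputable def Qgain {E P : Type*} [MeasurableSpace E] [MeasurableSpace P]
    (𝒞 : E → E → P → E) (b : Measure P) (f g : Measure E) : Measure E :=
  ((f.prod g).prod b).map fun p => 𝒞 p.1.1 p.1.2 p.2

/-- `q`-th moment `M_q(μ) = ∫ ‖v‖^q dμ`. -/
noncomputable def momq {E : Type*} [MeasurableSpace E] [NormedAddCommGroup E]
    (q : ℝ) (μ : Measure E) : ℝ := ∫ v, ‖v‖ ^ q ∂μ

/-- Bernoulli law `(1-p)δ₀ + pδ₁` on `ℝ`. -/
noncomputable def bern (p : ℝ) : Measure ℝ :=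
  ENNReal.ofReal (1 - p) • Measure.dirac (0 : ℝ) + ENNReal.ofReal p • Measure.dirac 1

/-- Uniform distribution on `[0,N)`. -/
noncomputable def unifIco (N : ℕ) : Measure ℝ :=
  ((N : ℝ≥0∞))⁻¹ • volume.restrict (Set.Ico (0 : ℝ) (N : ℝ))

/-- Index `j(α) = ⌊α⌋ + 1` (in 0-based indexing, `⌊α⌋`) of the collision partner. -/
def jIdx (N : ℕ) [NeZero N] (α : ℝ) : Fin N :=
  ⟨⌊α⌋.toNat % N, Nat.mod_lt _ (Nat.pos_of_ne_zero (NeZero.ne N))⟩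

/-- Empirical measure of a particle configuration. -/
noncomputable def empMeas {E : Type*} [MeasurableSpace E] {N : ℕ} (v : Fin N → E) : Measure E :=
  ((N : ℝ≥0∞))⁻¹ • ∑ i, Measure.dirac (v i)

/-- Forward Euler iterates `f_{n+1} = (1-Δt) f_n + Δt Q⁺(f_n,f_n)`. -/
noncomputable def eulerSeq {E P : Type*} [MeasurableSpace E] [MeasurableSpace P]
    (𝒞 : E → E → P → E) (b : Measure P) (f₀ : Measure E) (Δt : ℝ) : ℕ → Measure E
  | 0 => f₀
  | n + 1 =>
      ENNReal.ofReal (1 - Δt) • eulerSeq 𝒞 b f₀ Δt n +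
        ENNReal.ofReal Δt • Qgain 𝒞 b (eulerSeq 𝒞 b f₀ Δt n) (eulerSeq 𝒞 b f₀ Δt n)

/-- Piecewise-linear-in-time interpolation of the forward Euler iterates. -/
noncomputable def eulerInterp {E P : Type*} [MeasurableSpace E] [MeasurableSpace P]
    (𝒞 : E → E → P → E) (b : Measure P) (f₀ : Measure E) (Δt : ℝ) (t : ℝ) : Measure E :=
  ENNReal.ofReal (1 - (t - ⌊t / Δt⌋.toNat * Δt) / Δt) • eulerSeq 𝒞 b f₀ Δt ⌊t / Δt⌋.toNat +
    ENNReal.ofReal ((t - ⌊t / Δt⌋.toNat * Δt) / Δt) • eulerSeq 𝒞 b f₀ Δt (⌊t / Δt⌋.toNat + 1)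

/-- Monte Carlo rate `ε(N)` from `fournier2015rate`. -/
noncomputable def epsRate (d N : ℕ) : ℝ :=
  if d = 1 then (N : ℝ) ^ (-(1/2 : ℝ))
  else if d = 2 then (N : ℝ) ^ (-(1/2 : ℝ)) * Real.log (1 + N)
  else (N : ℝ) ^ (-(1 / (d : ℝ)))

/-- Right-hand side of the weak formulation of the Boltzmann-type equation,
tested against `φ`. -/
noncomputable def collRHS {E P : Type*} [MeasurableSpace E] [MeasurableSpace P]
    (𝒞 : E → E → P → E) (b : Measure P) (μ : Measure E) (φ : E → ℝ) : ℝ :=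
  (1/2) * ∫ p, (φ (𝒞 p.1.1 p.1.2 p.2) + φ (𝒞 p.1.2 p.1.1 p.2) - φ p.1.1 - φ p.1.2)
    ∂((μ.prod μ).prod b)

/-- Weak measure solution of `∂ₜ f = Q(f,f)` on `[0,T]`, with values in `P₁(ℝ^d)`
(continuity in the Wasserstein-1 distance), in integrated-in-time form. -/
def IsWeakSol {d m : ℕ} (𝒞 : Vec d → Vec d → Vec m → Vec d) (b : Measure (Vec m))
    (T : ℝ) (f : ℝ → Measure (Vec d)) : Prop :=
  (∀ t ∈ Set.Icc (0:ℝ) T, IsProbabilityMeasure (f t)) ∧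
  (∀ t ∈ Set.Icc (0:ℝ) T, Integrable (fun v : Vec d => ‖v‖) (f t)) ∧
  (∀ t ∈ Set.Icc (0:ℝ) T, ∀ ε > (0:ℝ), ∃ δ > (0:ℝ),
     ∀ s ∈ Set.Icc (0:ℝ) T, |s - t| < δ → W1 (f s) (f t) < ε) ∧
  ∀ φ : Vec d → ℝ, ContDiff ℝ (⊤ : ℕ∞) φ → HasCompactSupport φ →
    ∀ t ∈ Set.Icc (0:ℝ) T,
      (∫ v, φ v ∂(f t)) - (∫ v, φ v ∂(f 0)) = ∫ s in (0:ℝ)..t, collRHS 𝒞 b (f s) φ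

/-!
Write a measure as a formal mixture `∑ c μ • μ` of probability measures with finite first moment,
normalised so that the `ℓ¹` norm of a nonnegative `c` is the moment `∫ (1 + ‖v‖)` of the mixture.
The gain term then lifts to a bounded bilinear map of `ℓ¹`, and this needs only the growth of the
collision law. The collision equation becomes an ordinary differential equation in `ℓ¹` with a
locally Lipschitz field, and the Euler iterates are the mixtures of its Euler polygons.
Conservation of mass makes the gain term grow linearly on probability measures, so the polygons
stay in a bounded set, and Grönwall's inequality shows that they converge at rate `O(Δt)`. The
`ℓ¹` distance dominates `W1`, because two mixtures may be coupled by leaving their common part at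
rest.
-/

open Filter
open scoped NNReal Topology lp

section ApproximateTrajectories

variable {X : Type*} [NormedAddCommGroup X] [NormedSpace ℝ X] {G : X → X} {S : Set X} {x₀ : X}
  {T ε ε' : ℝ} {u v : ℝ → X} {Λ : ℝ≥0}

/-- An `ε`-approximate trajectory of `x' = G x` on `[0, T]`, issued from `x₀` and staying in `S`.
Derivatives are right derivatives, so that piecewise linear curves qualify, and a trajectory is
exact when `ε = 0`. -/
structure IsApproxTrajectory (G : X → X) (S : Set X) (x₀ : X) (T ε : ℝ) (u : ℝ → X) : Prop where
  initial : u 0 = x₀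
  continuousOn : ContinuousOn u (Icc 0 T)
  mem : ∀ t ∈ Icc 0 T, u t ∈ S
  exists_deriv : ∀ t ∈ Ico 0 T, ∃ u', HasDerivWithinAt u u' (Ici t) t ∧ dist u' (G (u t)) ≤ ε

theorem gronwallBound_zero_left (K ε x : ℝ) :
    gronwallBound 0 K ε x = ε * gronwallBound 0 K 1 x := by
  obtain rfl | hK := eq_or_ne K 0
  · simp [gronwallBound_K0]
  · simp only [gronwallBound_of_K_ne_0 hK]
    ring

namespace IsApproxTrajectory

theorem dist_le (hG : LipschitzOnWith Λ G S) (hu : IsApproxTrajectory G S x₀ T ε u)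
    (hv : IsApproxTrajectory G S x₀ T ε' v) (hε : 0 ≤ ε) (hε' : 0 ≤ ε') {t : ℝ}
    (ht : t ∈ Icc 0 T) : dist (u t) (v t) ≤ (ε + ε') * gronwallBound 0 Λ 1 T := by
  choose! u' hu' hGu using hu.exists_deriv
  choose! v' hv' hGv using hv.exists_deriv
  calc dist (u t) (v t) ≤ gronwallBound 0 Λ (ε + ε') (t - 0) :=
        dist_le_of_approx_trajectories_ODE_of_mem (v := fun _ => G) (s := fun _ => S)
          (fun _ _ => hG) hu.continuousOn hu' hGu (fun s hs => hu.mem s (Ico_subset_Icc_self hs))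
          hv.continuousOn hv' hGv (fun s hs => hv.mem s (Ico_subset_Icc_self hs))
          (by simp [hu.initial, hv.initial]) t ht
    _ ≤ gronwallBound 0 Λ (ε + ε') T :=
        gronwallBound_mono le_rfl (add_nonneg hε hε') Λ.2 (by simpa using ht.2)
    _ = (ε + ε') * gronwallBound 0 Λ 1 T := gronwallBound_zero_left _ _ _

theorem intervalIntegrable (hG : ContinuousOn G S) (hu : IsApproxTrajectory G S x₀ T ε u) {t : ℝ}
    (ht : t ∈ Icc 0 T) : IntervalIntegrable (fun s => G (u s)) volume 0 t := by
  refine ContinuousOn.intervalIntegrable ?_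
  rw [uIcc_of_le ht.1]
  exact (hG.comp hu.continuousOn hu.mem).mono (Icc_subset_Icc_right ht.2)

theorem sub_eq_integral [CompleteSpace X] (hG : ContinuousOn G S)
    (hu : IsApproxTrajectory G S x₀ T 0 u) {t : ℝ} (ht : t ∈ Icc 0 T) :
    u t - u 0 = ∫ s in 0..t, G (u s) := by
  refine (intervalIntegral.integral_eq_sub_of_hasDeriv_right ?_ ?_
    (hu.intervalIntegrable hG ht)).symm
  · rw [uIcc_of_le ht.1]
    exact hu.continuousOn.mono (Icc_subset_Icc_right ht.2)
  · rw [min_eq_left ht.1, max_eq_right ht.1]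
    intro s hs
    obtain ⟨u', hu', h⟩ := hu.exists_deriv s ⟨hs.1.le, hs.2.trans_le ht.2⟩
    rw [← dist_le_zero.1 h]
    exact hu'.mono Ioi_subset_Ici_self

theorem exists_tendstoUniformlyOn [CompleteSpace X] (hG : LipschitzOnWith Λ G S) {ε : ℕ → ℝ}
    (hε : ∀ n, 0 ≤ ε n) (hε₀ : Tendsto ε atTop (𝓝 0)) {u : ℕ → ℝ → X}
    (hu : ∀ n, IsApproxTrajectory G S x₀ T (ε n) (u n)) :
    ∃ q, TendstoUniformlyOn u q atTop (Icc 0 T) := by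
  have hCauchy : UniformCauchySeqOn u atTop (Icc 0 T) := by
    have hbound : Tendsto (fun n : ℕ × ℕ => (ε n.1 + ε n.2) * gronwallBound 0 Λ 1 T)
        atTop (𝓝 0) := by
      rw [← prod_atTop_atTop_eq]
      simpa using ((hε₀.comp tendsto_fst).add (hε₀.comp tendsto_snd)).mul_const
        (gronwallBound 0 Λ 1 T)
    refine Metric.uniformCauchySeqOn_iff.2 fun δ hδ => ?_
    obtain ⟨⟨a, b⟩, hab⟩ := eventually_atTop.1 (hbound.eventually (gt_mem_nhds hδ))
    exact ⟨max a b, fun m hm n hn t ht => (dist_le hG (hu m) (hu n) (hε m) (hε n) ht).trans_lt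
      (hab (m, n) ⟨(le_max_left a b).trans hm, (le_max_right a b).trans hn⟩)⟩
  have hlim : ∀ t ∈ Icc 0 T, ∃ y, Tendsto (fun n => u n t) atTop (𝓝 y) :=
    fun t ht => cauchySeq_tendsto_of_complete (hCauchy.cauchySeq ht)
  choose! q hq using hlim
  exact ⟨q, hCauchy.tendstoUniformlyOn_of_tendsto hq⟩

theorem norm_sub_integral_le [CompleteSpace X] (hG : LipschitzOnWith Λ G S)
    (hu : IsApproxTrajectory G S x₀ T ε u) {q : ℝ → X} (hq : Continuous q) (hqS : ∀ t, q t ∈ S)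
    {δ : ℝ} (hδ : ∀ t ∈ Icc 0 T, dist (u t) (q t) ≤ δ) {t : ℝ} (ht : t ∈ Icc 0 T) :
    ‖u t - (x₀ + ∫ s in 0..t, G (q s))‖ ≤ (ε + Λ * δ) * t := by
  have hGq : Continuous fun s => G (q s) := hG.continuousOn.comp_continuous hq hqS
  choose! u' hu' hGu using hu.exists_deriv
  have hderiv : ∀ s ∈ Ico 0 T, ‖u' s - G (q s)‖ ≤ ε + Λ * δ := fun s hs => by
    have hs' := Ico_subset_Icc_self hs
    rw [← dist_eq_norm]
    calc dist (u' s) (G (q s)) ≤ dist (u' s) (G (u s)) + dist (G (u s)) (G (q s)) :=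
          dist_triangle _ _ _
      _ ≤ ε + Λ * dist (u s) (q s) :=
          add_le_add (hGu s hs) (hG.dist_le_mul _ (hu.mem s hs') _ (hqS s))
      _ ≤ ε + Λ * δ := by gcongr; exact hδ s hs'
  have h := norm_image_sub_le_of_norm_deriv_right_le_segment
    (hu.continuousOn.sub (intervalIntegral.continuous_primitive
      (fun a b => hGq.intervalIntegrable a b) 0).continuousOn)
    (fun s hs => (hu' s hs).sub
      (hGq.integral_hasStrictDerivAt 0 s).hasDerivAt.hasDerivWithinAt) hderiv t ht
  simpa [hu.initial, sub_sub, add_comm] using h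

theorem exists_of_tendsto_zero [CompleteSpace X] (hT : 0 ≤ T) (hS : IsClosed S)
    (hG : LipschitzOnWith Λ G S) {ε : ℕ → ℝ} (hε : ∀ n, 0 ≤ ε n)
    (hε₀ : Tendsto ε atTop (𝓝 0)) {u : ℕ → ℝ → X}
    (hu : ∀ n, IsApproxTrajectory G S x₀ T (ε n) (u n)) :
    ∃ p, IsApproxTrajectory G S x₀ T 0 p := by
  obtain ⟨q, huq⟩ := exists_tendstoUniformlyOn hG hε hε₀ hu
  have hqS : ∀ t ∈ Icc 0 T, q t ∈ S := fun t ht =>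
    hS.mem_of_tendsto (huq.tendsto_at ht) (.of_forall fun n => (hu n).mem t ht)
  have hq : ContinuousOn q (Icc 0 T) := huq.continuousOn (.of_forall fun n => (hu n).continuousOn)
  let r : ℝ → X := IccExtend hT (domRestrict (Icc 0 T) q)
  have hr : Continuous r := hq.domRestrict.Icc_extend'
  have hrS : ∀ t, r t ∈ S := fun t => hqS _ (projIcc 0 T hT t).2
  have hrq : ∀ t ∈ Icc 0 T, r t = q t := fun t ht => IccExtend_of_mem hT _ ht
  let p : ℝ → X := fun t => x₀ + ∫ s in 0..t, G (r s)
  have hpq : ∀ t ∈ Icc 0 T, p t = q t := fun t ht => by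
    have hδ : ∀ δ > 0, ‖q t - p t‖ ≤ (0 + Λ * δ) * t := fun δ hδ =>
      le_of_tendsto_of_tendsto ((huq.tendsto_at ht).sub_const (p t)).norm
        ((hε₀.add_const (Λ * δ)).mul_const t)
        ((Metric.tendstoUniformlyOn_iff.1 huq δ hδ).mono fun n hn =>
          norm_sub_integral_le hG (hu n) hr hrS (fun s hs => by
            rw [hrq s hs, dist_comm]; exact (hn s hs).le) ht)
    have hlim : Tendsto (fun δ : ℝ => (0 + Λ * δ) * t) (𝓝[>] 0) (𝓝 0) :=
      tendsto_nhdsWithin_of_tendsto_nhds <| Continuous.tendsto' (by fun_prop) _ _ (by simp)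
    have hzero : ‖q t - p t‖ ≤ 0 :=
      ge_of_tendsto hlim (eventually_mem_nhdsWithin.mono hδ)
    exact (sub_eq_zero.1 (norm_le_zero_iff.1 hzero)).symm
  have hp' : ∀ t, HasDerivAt p (G (r t)) t := fun t =>
    ((hG.continuousOn.comp_continuous hr hrS).integral_hasStrictDerivAt 0 t).hasDerivAt.const_add x₀
  refine ⟨p, by simp [p], fun t _ => (hp' t).continuousAt.continuousWithinAt,
    fun t ht => hpq t ht ▸ hqS t ht, fun t ht => ⟨G (r t), (hp' t).hasDerivWithinAt, ?_⟩⟩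
  have ht' := Ico_subset_Icc_self ht
  rw [hpq t ht', hrq t ht', dist_self]

end IsApproxTrajectory

end ApproximateTrajectories

section EulerPolygon

variable {X : Type*} [NormedAddCommGroup X] [NormedSpace ℝ X] {G : X → X} {S : Set X} {x₀ : X}
  {h t T M : ℝ} {Λ : ℝ≥0}

/-- One explicit Euler step of length `h` for `x' = G x`. -/
def eulerStep (G : X → X) (h : ℝ) (x : X) : X := x + h • G x

theorem eulerStep_convexCombination (G : X → X) (τ h : ℝ) (x : X) :
    (1 - τ) • x + τ • eulerStep G h x = eulerStep G (τ * h) x := by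
  rw [eulerStep, eulerStep]
  module

/-- The Euler polygon of `x' = G x` with mesh `h` issued from `x₀`, for nonnegative times. -/
def eulerPolygon (G : X → X) (x₀ : X) (h t : ℝ) : X :=
  eulerStep G (t - ⌊t / h⌋₊ * h) ((eulerStep G h)^[⌊t / h⌋₊] x₀)

theorem mem_Ico_floor_mul (hh : 0 < h) (ht : 0 ≤ t) :
    t ∈ Ico (⌊t / h⌋₊ * h) ((⌊t / h⌋₊ + 1) * h) :=
  ⟨(le_div_iff₀ hh).1 (Nat.floor_le (by positivity)),
    (div_lt_iff₀ hh).1 (Nat.lt_floor_add_one _)⟩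

theorem eulerPolygon_of_mem_Ico (hh : 0 < h) {n : ℕ} (ht : t ∈ Ico (n * h) ((n + 1) * h)) :
    eulerPolygon G x₀ h t = eulerStep G (t - n * h) ((eulerStep G h)^[n] x₀) := by
  have hn : ⌊t / h⌋₊ = n := by
    have ht₀ : 0 ≤ t := le_trans (by positivity) ht.1
    rw [Nat.floor_eq_iff (by positivity), le_div_iff₀ hh, div_lt_iff₀ hh]
    exact ht
  rw [eulerPolygon, hn]

theorem eulerPolygon_natCast_mul (hh : 0 < h) (n : ℕ) :
    eulerPolygon G x₀ h (n * h) = (eulerStep G h)^[n] x₀ := by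
  rw [eulerPolygon_of_mem_Ico hh (n := n) ⟨le_rfl, by gcongr; linarith⟩, sub_self, eulerStep,
    zero_smul, add_zero]

theorem eulerPolygon_of_mem_Icc (hh : 0 < h) {n : ℕ} (ht : t ∈ Icc (n * h) ((n + 1) * h)) :
    eulerPolygon G x₀ h t = eulerStep G (t - n * h) ((eulerStep G h)^[n] x₀) := by
  obtain hlt | rfl := ht.2.lt_or_eq
  · exact eulerPolygon_of_mem_Ico hh ⟨ht.1, hlt⟩
  · have hnode := eulerPolygon_natCast_mul (G := G) (x₀ := x₀) hh (n + 1)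
    rw [Nat.cast_succ, Function.iterate_succ_apply'] at hnode
    rw [hnode, add_mul, one_mul, add_sub_cancel_left]

theorem continuousOn_eulerPolygon_Icc_natCast_mul (hh : 0 < h) (n : ℕ) :
    ContinuousOn (eulerPolygon G x₀ h) (Icc 0 (n * h)) := by
  induction n with
  | zero => simp
  | succ n ih =>
    have hsplit : Icc 0 ((n + 1 : ℕ) * h) = Icc 0 (n * h) ∪ Icc (n * h) ((n + 1) * h) := by
      rw [Icc_union_Icc_eq_Icc (by positivity) (by gcongr; linarith), Nat.cast_succ]
    rw [hsplit]
    refine ih.union_of_isClosed (ContinuousOn.congr ?_ fun t ht => eulerPolygon_of_mem_Icc hh ht)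
      isClosed_Icc isClosed_Icc
    unfold eulerStep
    fun_prop

theorem continuousOn_eulerPolygon (hh : 0 < h) :
    ContinuousOn (eulerPolygon G x₀ h) (Icc 0 T) :=
  (continuousOn_eulerPolygon_Icc_natCast_mul hh ⌈T / h⌉₊).mono <|
    Icc_subset_Icc_right <| (div_le_iff₀ hh).1 (Nat.le_ceil _)

theorem hasDerivWithinAt_eulerPolygon (hh : 0 < h) (ht : 0 ≤ t) :
    HasDerivWithinAt (eulerPolygon G x₀ h) (G (eulerPolygon G x₀ h (⌊t / h⌋₊ * h))) (Ici t) t := by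
  set n := ⌊t / h⌋₊
  have htn : t ∈ Ico (n * h) ((n + 1) * h) := mem_Ico_floor_mul hh ht
  rw [eulerPolygon_natCast_mul hh]
  have hline : HasDerivAt (fun s : ℝ => eulerStep G (s - n * h) ((eulerStep G h)^[n] x₀))
      (G ((eulerStep G h)^[n] x₀)) t := by
    simpa [eulerStep] using (((hasDerivAt_id t).sub_const (n * h)).smul_const
      (G ((eulerStep G h)^[n] x₀))).const_add ((eulerStep G h)^[n] x₀)
  refine hline.hasDerivWithinAt.congr_of_eventuallyEq ?_ (eulerPolygon_of_mem_Ico hh htn)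
  filter_upwards [Ico_mem_nhdsGE htn.2] with s hs
  exact eulerPolygon_of_mem_Ico hh ⟨htn.1.trans hs.1, hs.2⟩

theorem eulerPolygon_sub_node (hh : 0 < h) :
    eulerPolygon G x₀ h t - eulerPolygon G x₀ h (⌊t / h⌋₊ * h) =
      (t - ⌊t / h⌋₊ * h) • G (eulerPolygon G x₀ h (⌊t / h⌋₊ * h)) := by
  rw [eulerPolygon_natCast_mul hh, eulerPolygon, eulerStep, add_sub_cancel_left]

theorem isApproxTrajectory_eulerPolygon (hh : 0 < h) (hG : LipschitzOnWith Λ G S)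
    (hM : ∀ x ∈ S, ‖G x‖ ≤ M) (hmem : ∀ t ∈ Icc 0 T, eulerPolygon G x₀ h t ∈ S) :
    IsApproxTrajectory G S x₀ T (Λ * (h * M)) (eulerPolygon G x₀ h) where
  initial := by simpa using eulerPolygon_natCast_mul (G := G) (x₀ := x₀) hh 0
  continuousOn := continuousOn_eulerPolygon hh
  mem := hmem
  exists_deriv t ht := by
    refine ⟨_, hasDerivWithinAt_eulerPolygon hh ht.1, ?_⟩
    have hfloor := mem_Ico_floor_mul hh ht.1
    have hnode : eulerPolygon G x₀ h (⌊t / h⌋₊ * h) ∈ S :=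
      hmem _ ⟨by positivity, hfloor.1.trans ht.2.le⟩
    refine (hG.dist_le_mul _ hnode _ (hmem t (Ico_subset_Icc_self ht))).trans ?_
    rw [dist_comm, dist_eq_norm, eulerPolygon_sub_node hh, norm_smul,
      Real.norm_of_nonneg (sub_nonneg.2 hfloor.1)]
    gcongr
    · linarith [hfloor.2]
    · exact hM _ hnode

end EulerPolygon

section SummableFamilies

variable {ι κ F : Type*} [NormedAddCommGroup F]

theorem hasSum_norm_ell1 (x : ℓ¹(ι, F)) : HasSum (fun i => ‖x i‖) ‖x‖ := by
  simpa using lp.hasSum_norm (by norm_num) x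

theorem tsum_enorm_ell1 (x : ℓ¹(ι, F)) : ∑' i, ‖x i‖ₑ = ‖x‖ₑ := by
  simp_rw [← ofReal_norm]
  rw [← (hasSum_norm_ell1 x).tsum_eq,
    ENNReal.ofReal_tsum_of_nonneg (fun i => norm_nonneg _) (hasSum_norm_ell1 x).summable]

theorem tsum_ofReal_ell1 {x : ℓ¹(ι, ℝ)} (hx : ∀ i, 0 ≤ x i) :
    ∑' i, ENNReal.ofReal (x i) = ‖x‖ₑ := by
  rw [← tsum_enorm_ell1]
  exact tsum_congr fun i => (Real.enorm_of_nonneg (hx i)).symm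

theorem tsum_ofReal_add_tsum_ofReal_neg_ell1 (x : ℓ¹(ι, ℝ)) :
    ∑' i, ENNReal.ofReal (x i) + ∑' i, ENNReal.ofReal (-x i) = ‖x‖ₑ := by
  rw [← tsum_enorm_ell1, ← ENNReal.tsum_add]
  refine tsum_congr fun i => ?_
  obtain hi | hi := le_total 0 (x i)
  · simp [hi, Real.enorm_of_nonneg hi]
  · rw [← enorm_neg, Real.enorm_of_nonneg (neg_nonneg.2 hi), ENNReal.ofReal_of_nonpos hi, zero_add]

theorem hasSum_apply_of_hasSum_ell1 {c : ι → ℝ} {v : ι → ℓ¹(κ, ℝ)} {w : ℓ¹(κ, ℝ)}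
    (hw : HasSum (fun i => c i • v i) w) (j : κ) : HasSum (fun i => c i * v i j) (w j) :=
  (lp.evalCLM ℝ (fun _ : κ => ℝ) 1 j).hasSum hw

theorem tsum_ofReal_mul_of_hasSum_ell1 {c : ι → ℝ} {v : ι → ℓ¹(κ, ℝ)} {w : ℓ¹(κ, ℝ)}
    (hc : ∀ i, 0 ≤ c i) (hv : ∀ i j, 0 ≤ v i j) (hw : HasSum (fun i => c i • v i) w)
    (u : κ → ℝ≥0∞) :
    ∑' j, ENNReal.ofReal (w j) * u j =
      ∑' i, ENNReal.ofReal (c i) * ∑' j, ENNReal.ofReal (v i j) * u j := by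
  have hcoord : ∀ j, ENNReal.ofReal (w j) =
      ∑' i, ENNReal.ofReal (c i) * ENNReal.ofReal (v i j) := fun j => by
    have hj := hasSum_apply_of_hasSum_ell1 hw j
    simp_rw [← ENNReal.ofReal_mul (hc _)]
    rw [← hj.tsum_eq, ENNReal.ofReal_tsum_of_nonneg (fun i => mul_nonneg (hc i) (hv i j))
      hj.summable]
  simp_rw [hcoord, ← ENNReal.tsum_mul_right, ← ENNReal.tsum_mul_left, ← mul_assoc]
  exact ENNReal.tsum_comm

variable [NormedSpace ℝ F] [CompleteSpace F] {v : ι → F} {C : ℝ≥0}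

/-- The continuous linear map `x ↦ ∑' i, x i • v i` on `ℓ¹` induced by a bounded family `v`. -/
def ell1Lift (v : ι → F) (hv : ∀ i, ‖v i‖ ≤ C) : ℓ¹(ι, ℝ) →L[ℝ] F :=
  (lp.tsumCLM ℝ ι F).comp <| lp.mapCLM 1
    (fun i => ContinuousLinearMap.toSpanSingleton ℝ (v i)) C.coe_nonneg
    fun i => (ContinuousLinearMap.norm_toSpanSingleton (v i)).trans_le (hv i)

theorem norm_ell1Lift_le (hv : ∀ i, ‖v i‖ ≤ C) : ‖ell1Lift v hv‖ ≤ C :=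
  (ContinuousLinearMap.opNorm_comp_le _ _).trans <|
    (mul_le_mul lp.norm_tsumCLM_le (lp.norm_mapCLM_le _ _ _ _) (norm_nonneg _)
      zero_le_one).trans_eq (one_mul _)

theorem hasSum_ell1Lift (hv : ∀ i, ‖v i‖ ≤ C) (x : ℓ¹(ι, ℝ)) :
    HasSum (fun i => x i • v i) (ell1Lift v hv x) := by
  refine (Summable.of_norm_bounded ((hasSum_norm_ell1 x).summable.mul_right (C : ℝ))
    fun i => ?_).hasSum
  rw [norm_smul]
  exact mul_le_mul_of_nonneg_left (hv i) (norm_nonneg _)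

theorem hasSum_ell1Lift_apply {G : Type*} [NormedAddCommGroup G] [NormedSpace ℝ G]
    {v : ι → G →L[ℝ] F} (hv : ∀ i, ‖v i‖ ≤ C) (x : ℓ¹(ι, ℝ)) (y : G) :
    HasSum (fun i => x i • v i y) (ell1Lift v hv x y) := by
  simpa using (hasSum_ell1Lift hv x).mapL (ContinuousLinearMap.apply ℝ F y)

end SummableFamilies

section Wasserstein

variable {E : Type*} [MeasurableSpace E]

/-- For `α` and `β` of equal mass, the coupling of `ρ + α` with `ρ + β` that leaves the common
part `ρ` at rest and couples `α` with `β` independently. -/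
def commonPartCoupling (ρ α β : Measure E) : Measure (E × E) :=
  ρ.map (fun v => (v, v)) + (α univ)⁻¹ • α.prod β

theorem map_swap_commonPartCoupling (ρ : Measure E) {α β : Measure E} [SFinite α] [SFinite β]
    (hmass : α univ = β univ) :
    (commonPartCoupling ρ α β).map Prod.swap = commonPartCoupling ρ β α := by
  rw [commonPartCoupling, commonPartCoupling, Measure.map_add _ _ measurable_swap,
    Measure.map_map measurable_swap (by fun_prop), Measure.map_smul, Measure.prod_swap, hmass]
  rfl

theorem map_fst_commonPartCoupling (ρ : Measure E) {α β : Measure E} [IsFiniteMeasure α]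
    [SFinite β] (hmass : α univ = β univ) :
    (commonPartCoupling ρ α β).map Prod.fst = ρ + α := by
  have hinv : ((α univ)⁻¹ * α univ) • α = α := by
    obtain rfl | hα := eq_or_ne α 0
    · simp
    · rw [ENNReal.inv_mul_cancel (Measure.measure_univ_ne_zero.2 hα) (measure_ne_top _ _), one_smul]
  rw [commonPartCoupling, Measure.map_add _ _ measurable_fst,
    Measure.map_map measurable_fst (by fun_prop), Measure.map_smul, Measure.map_fst_prod, smul_smul,
    ← hmass, hinv]
  exact congrArg (· + α) Measure.map_id

theorem map_snd_commonPartCoupling (ρ : Measure E) {α β : Measure E} [SFinite α]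
    [IsFiniteMeasure β] (hmass : α univ = β univ) :
    (commonPartCoupling ρ α β).map Prod.snd = ρ + β := by
  rw [← map_fst_commonPartCoupling ρ hmass.symm, ← map_swap_commonPartCoupling ρ hmass,
    Measure.map_map measurable_fst measurable_swap]
  rfl

variable [NormedAddCommGroup E]

theorem W1_nonneg (μ ν : Measure E) : 0 ≤ W1 μ ν :=
  Real.sInf_nonneg <| by
    rintro _ ⟨γ, -, -, rfl⟩
    positivity

theorem W1_le_integral_of_coupling {μ ν : Measure E} {γ : Measure (E × E)}
    (hμ : γ.map Prod.fst = μ) (hν : γ.map Prod.snd = ν) : W1 μ ν ≤ ∫ p, ‖p.1 - p.2‖ ∂γ := by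
  refine csInf_le ⟨0, ?_⟩ ⟨γ, hμ, hν, rfl⟩
  rintro _ ⟨γ', -, -, rfl⟩
  exact integral_nonneg fun _ => norm_nonneg _

variable [BorelSpace E] [SecondCountableTopology E]

theorem lintegral_enorm_sub_prod_le (α β : Measure E) [SFinite β] :
    ∫⁻ p, ‖p.1 - p.2‖ₑ ∂(α.prod β) ≤ β univ * ∫⁻ v, ‖v‖ₑ ∂α + α univ * ∫⁻ v, ‖v‖ₑ ∂β :=
  calc ∫⁻ p, ‖p.1 - p.2‖ₑ ∂(α.prod β) ≤ ∫⁻ p, ‖p.1‖ₑ + ‖p.2‖ₑ ∂(α.prod β) :=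
        lintegral_mono fun p => enorm_sub_le
    _ = ∫⁻ v, ‖v‖ₑ ∂(α.prod β).map Prod.fst + ∫⁻ v, ‖v‖ₑ ∂(α.prod β).map Prod.snd := by
        rw [lintegral_add_left (by fun_prop), lintegral_map (by fun_prop) measurable_fst,
          lintegral_map (by fun_prop) measurable_snd]
    _ = β univ * ∫⁻ v, ‖v‖ₑ ∂α + α univ * ∫⁻ v, ‖v‖ₑ ∂β := by
        simp only [Measure.map_fst_prod, Measure.map_snd_prod, lintegral_smul_measure, smul_eq_mul]

theorem lintegral_enorm_sub_commonPartCoupling_le (ρ : Measure E) {α β : Measure E} [SFinite β]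
    (hmass : α univ = β univ) :
    ∫⁻ p, ‖p.1 - p.2‖ₑ ∂(commonPartCoupling ρ α β) ≤ ∫⁻ v, ‖v‖ₑ ∂α + ∫⁻ v, ‖v‖ₑ ∂β :=
  calc ∫⁻ p, ‖p.1 - p.2‖ₑ ∂(commonPartCoupling ρ α β)
      = (α univ)⁻¹ * ∫⁻ p, ‖p.1 - p.2‖ₑ ∂(α.prod β) := by
        rw [commonPartCoupling, lintegral_add_measure, lintegral_smul_measure,
          lintegral_map (by fun_prop) (by fun_prop)]
        simp
    _ ≤ (α univ)⁻¹ * (α univ * (∫⁻ v, ‖v‖ₑ ∂α + ∫⁻ v, ‖v‖ₑ ∂β)) := by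
        gcongr
        rw [mul_add]
        exact (lintegral_enorm_sub_prod_le α β).trans_eq (by rw [hmass])
    _ ≤ ∫⁻ v, ‖v‖ₑ ∂α + ∫⁻ v, ‖v‖ₑ ∂β := by
        rw [← mul_assoc]
        exact mul_le_of_le_one_left' (ENNReal.inv_mul_le_one _)

theorem W1_add_left_le (ρ : Measure E) {α β : Measure E} [IsFiniteMeasure α] [IsFiniteMeasure β]
    (hmass : α univ = β univ) (hfin : ∫⁻ v, ‖v‖ₑ ∂α + ∫⁻ v, ‖v‖ₑ ∂β ≠ ∞) :
    W1 (ρ + α) (ρ + β) ≤ (∫⁻ v, ‖v‖ₑ ∂α + ∫⁻ v, ‖v‖ₑ ∂β).toReal := by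
  refine (W1_le_integral_of_coupling (map_fst_commonPartCoupling ρ hmass)
    (map_snd_commonPartCoupling ρ hmass)).trans ?_
  rw [integral_norm_eq_lintegral_enorm (by fun_prop)]
  exact ENNReal.toReal_mono hfin (lintegral_enorm_sub_commonPartCoupling_le ρ hmass)

end Wasserstein

section Mixtures

variable {E : Type*} [NormedAddCommGroup E] [MeasurableSpace E]

/-- The moment `∫ (1 + ‖v‖) dμ`, which controls both the mass and the first moment. -/
def shiftedMoment (μ : Measure E) : ℝ≥0∞ := ∫⁻ v, (1 + ‖v‖ₑ) ∂μ

/-- The space `P₁(E)` of probability measures on `E` with finite first moment. -/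
abbrev P1 (E : Type*) [NormedAddCommGroup E] [MeasurableSpace E] :=
  {μ : Measure E // IsProbabilityMeasure μ ∧ shiftedMoment μ ≠ ∞}

theorem lintegral_enorm_le_shiftedMoment (μ : Measure E) : ∫⁻ v, ‖v‖ₑ ∂μ ≤ shiftedMoment μ :=
  lintegral_mono fun _ => le_add_self

theorem measure_univ_le_shiftedMoment (μ : Measure E) : μ univ ≤ shiftedMoment μ :=
  (lintegral_one (μ := μ)).symm.trans_le (lintegral_mono fun _ => le_self_add)

theorem shiftedMoment_ne_top_of_integrable_norm {μ : Measure E} [IsFiniteMeasure μ]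
    (hμ : Integrable (fun v => ‖v‖) μ) : shiftedMoment μ ≠ ∞ := by
  have h : ∫⁻ v, ‖v‖ₑ ∂μ ≠ ∞ := by simpa [HasFiniteIntegral] using hμ.2.ne
  rw [shiftedMoment, lintegral_add_left measurable_const, lintegral_one]
  exact ENNReal.add_ne_top.2 ⟨measure_ne_top _ _, h⟩

theorem integrable_norm_of_shiftedMoment_ne_top [OpensMeasurableSpace E] {μ : Measure E}
    (hμ : shiftedMoment μ ≠ ∞) : Integrable (fun v => ‖v‖) μ :=
  ⟨(by fun_prop), by
    simpa [HasFiniteIntegral] using (lintegral_enorm_le_shiftedMoment μ).trans_lt hμ.lt_top⟩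

namespace P1

instance (μ : P1 E) : IsProbabilityMeasure μ.1 := μ.2.1

theorem one_le_shiftedMoment (μ : P1 E) : 1 ≤ shiftedMoment μ.1 :=
  measure_univ.symm.trans_le (measure_univ_le_shiftedMoment μ.1)

theorem one_le_toReal_shiftedMoment (μ : P1 E) : 1 ≤ (shiftedMoment μ.1).toReal :=
  ENNReal.toReal_one.symm.trans_le (ENNReal.toReal_mono μ.2.2 μ.one_le_shiftedMoment)

theorem shiftedMoment_ne_zero (μ : P1 E) : shiftedMoment μ.1 ≠ 0 :=
  (zero_lt_one.trans_le μ.one_le_shiftedMoment).ne'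

theorem shiftedMoment_inv_mul_shiftedMoment (μ : P1 E) :
    (shiftedMoment μ.1)⁻¹ * shiftedMoment μ.1 = 1 :=
  ENNReal.inv_mul_cancel μ.shiftedMoment_ne_zero μ.2.2

end P1

/-- The measure `∑ μ, (c μ)₊ / shiftedMoment μ • μ`. The normalisation makes the moment of the
mixture the `ℓ¹` norm of its coefficients; the positive part comes from `ENNReal.ofReal`. -/
def mixture (c : P1 E → ℝ) : Measure E :=
  Measure.sum fun μ => (ENNReal.ofReal (c μ) * (shiftedMoment μ.1)⁻¹) • μ.1

theorem lintegral_mixture (c : P1 E → ℝ) (φ : E → ℝ≥0∞) :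
    ∫⁻ v, φ v ∂(mixture c) =
      ∑' μ, ENNReal.ofReal (c μ) * ((shiftedMoment μ.1)⁻¹ * ∫⁻ v, φ v ∂μ.1) := by
  simp only [mixture, lintegral_sum_measure, lintegral_smul_measure, smul_eq_mul, mul_assoc]

theorem shiftedMoment_mixture (c : P1 E → ℝ) :
    shiftedMoment (mixture c) = ∑' μ, ENNReal.ofReal (c μ) := by
  rw [shiftedMoment, lintegral_mixture]
  refine tsum_congr fun μ => ?_
  rw [← shiftedMoment, μ.shiftedMoment_inv_mul_shiftedMoment, mul_one]

theorem shiftedMoment_mixture_of_nonneg {x : ℓ¹(P1 E, ℝ)} (hx : ∀ μ, 0 ≤ x μ) :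
    shiftedMoment (mixture x) = ‖x‖ₑ := by
  rw [shiftedMoment_mixture, tsum_ofReal_ell1 hx]

theorem mixture_add {c c' : P1 E → ℝ} (hc : ∀ μ, 0 ≤ c μ) (hc' : ∀ μ, 0 ≤ c' μ) :
    mixture (c + c') = mixture c + mixture c' := by
  simp only [mixture, Measure.sum_add_sum, ← add_smul, ← add_mul, Pi.add_apply,
    ENNReal.ofReal_add (hc _) (hc' _)]

theorem mixture_smul {r : ℝ} (hr : 0 ≤ r) (c : P1 E → ℝ) :
    mixture (r • c) = ENNReal.ofReal r • mixture c := by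
  ext s hs
  simp only [mixture, Measure.smul_apply, Measure.sum_apply _ hs, Pi.smul_apply, smul_eq_mul,
    ENNReal.ofReal_mul hr, ← ENNReal.tsum_mul_left, mul_assoc]

theorem mixture_inf_add_mixture_sub {c c' : P1 E → ℝ} (hc' : ∀ μ, 0 ≤ c' μ) :
    mixture (c ⊓ c') + mixture (c - c') = mixture c := by
  simp only [mixture, Measure.sum_add_sum, ← add_smul, ← add_mul]
  congr! 4 with μ
  obtain h | h := le_total (c μ) (c' μ)
  · simp [h]
  · simp [h, ← ENNReal.ofReal_add (hc' μ) (sub_nonneg.2 h)]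

/-- The coefficients of `μ` itself as a mixture. -/
def P1.pure (μ : P1 E) : ℓ¹(P1 E, ℝ) :=
  open Classical in lp.single 1 μ (shiftedMoment μ.1).toReal

theorem P1.norm_pure (μ : P1 E) : ‖μ.pure‖ = (shiftedMoment μ.1).toReal := by
  simp [P1.pure, lp.norm_single]

theorem P1.pure_nonneg (μ ν : P1 E) : 0 ≤ μ.pure ν := by
  classical
  obtain rfl | h := eq_or_ne ν μ
  · simp [P1.pure]
  · simp [P1.pure, h]

theorem P1.tsum_ofReal_pure_mul (μ : P1 E) (u : P1 E → ℝ≥0∞) :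
    ∑' ν, ENNReal.ofReal (μ.pure ν) * u ν = shiftedMoment μ.1 * u μ := by
  classical
  rw [tsum_eq_single μ fun ν hν => by simp [P1.pure, hν]]
  simp [P1.pure, ENNReal.ofReal_toReal μ.2.2]

theorem P1.mixture_pure (μ : P1 E) : mixture μ.pure = μ.1 := by
  ext s hs
  have h := μ.tsum_ofReal_pure_mul fun ν => (shiftedMoment ν.1)⁻¹ * ν.1 s
  rw [← mul_assoc, mul_comm (shiftedMoment μ.1), μ.shiftedMoment_inv_mul_shiftedMoment, one_mul]
    at h
  simpa only [mixture, Measure.sum_apply _ hs, Measure.smul_apply, smul_eq_mul, mul_assoc] using h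

theorem shiftedMoment_mixture_add_neg (x : ℓ¹(P1 E, ℝ)) :
    shiftedMoment (mixture x) + shiftedMoment (mixture (-x)) = ‖x‖ₑ := by
  rw [shiftedMoment_mixture, shiftedMoment_mixture]
  exact tsum_ofReal_add_tsum_ofReal_neg_ell1 x

theorem isFiniteMeasure_mixture (x : ℓ¹(P1 E, ℝ)) : IsFiniteMeasure (mixture x) :=
  ⟨(measure_univ_le_shiftedMoment _).trans_lt <|
    (le_self_add.trans_eq (shiftedMoment_mixture_add_neg x)).trans_lt enorm_lt_top⟩

theorem W1_mixture_le [BorelSpace E] [SecondCountableTopology E] {x y : ℓ¹(P1 E, ℝ)}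
    (hx : ∀ μ, 0 ≤ x μ) (hy : ∀ μ, 0 ≤ y μ) (hmass : mixture x univ = mixture y univ) :
    W1 (mixture x) (mixture y) ≤ ‖x - y‖ := by
  have := isFiniteMeasure_mixture (x - y)
  have := isFiniteMeasure_mixture (-(x - y))
  have := isFiniteMeasure_mixture x
  have hρx : mixture (⇑x ⊓ ⇑y) + mixture (x - y) = mixture x := mixture_inf_add_mixture_sub hy
  have hρy : mixture (⇑x ⊓ ⇑y) + mixture (-(x - y)) = mixture y := by
    rw [inf_comm, neg_sub]
    exact mixture_inf_add_mixture_sub hx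
  have hρ : mixture (⇑x ⊓ ⇑y) univ ≠ ∞ :=
    ne_top_of_le_ne_top (measure_ne_top (mixture x) univ) (hρx ▸ le_self_add)
  have hmass' : mixture (x - y) univ = mixture (-(x - y)) univ := by
    rw [← hρx, ← hρy, Measure.add_apply, Measure.add_apply] at hmass
    exact (ENNReal.add_right_inj hρ).1 hmass
  have hcost : ∫⁻ v, ‖v‖ₑ ∂(mixture (x - y)) + ∫⁻ v, ‖v‖ₑ ∂(mixture (-(x - y))) ≤ ‖x - y‖ₑ :=
    (add_le_add (lintegral_enorm_le_shiftedMoment _)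
      (lintegral_enorm_le_shiftedMoment _)).trans_eq (shiftedMoment_mixture_add_neg (x - y))
  calc W1 (mixture x) (mixture y)
      = W1 (mixture (⇑x ⊓ ⇑y) + mixture (x - y)) (mixture (⇑x ⊓ ⇑y) + mixture (-(x - y))) := by
        rw [hρx, hρy]
    _ ≤ (∫⁻ v, ‖v‖ₑ ∂(mixture (x - y)) + ∫⁻ v, ‖v‖ₑ ∂(mixture (-(x - y)))).toReal :=
        W1_add_left_le _ hmass' (hcost.trans_lt enorm_lt_top).ne
    _ ≤ ‖x - y‖ₑ.toReal := ENNReal.toReal_mono enorm_ne_top hcost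
    _ = ‖x - y‖ := toReal_enorm _

variable {φ : E → ℝ} {C : ℝ≥0}

theorem P1.norm_inv_shiftedMoment_smul_integral_le (hφ : ∀ v, ‖φ v‖ ≤ C) (μ : P1 E) :
    ‖(shiftedMoment μ.1).toReal⁻¹ • ∫ v, φ v ∂μ.1‖ ≤ C := by
  have hint : ‖∫ v, φ v ∂μ.1‖ ≤ C := by
    simpa using norm_integral_le_of_norm_le_const (μ := μ.1) (.of_forall hφ)
  have hinv : ‖(shiftedMoment μ.1).toReal⁻¹‖ ≤ 1 := by
    rw [Real.norm_of_nonneg (by positivity)]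
    exact inv_le_one_of_one_le₀ μ.one_le_toReal_shiftedMoment
  rw [norm_smul]
  exact (mul_le_of_le_one_left (norm_nonneg _) hinv).trans hint

/-- For bounded `φ`, the functional on `ℓ¹` that computes `∫ φ` of a mixture. -/
def mixtureIntegral (hφ : ∀ v, ‖φ v‖ ≤ C) : ℓ¹(P1 E, ℝ) →L[ℝ] ℝ :=
  ell1Lift _ (P1.norm_inv_shiftedMoment_smul_integral_le hφ)

theorem integral_mixture (hφm : Measurable φ) (hφ : ∀ v, ‖φ v‖ ≤ C) {x : ℓ¹(P1 E, ℝ)}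
    (hx : ∀ μ, 0 ≤ x μ) : ∫ v, φ v ∂(mixture x) = mixtureIntegral hφ x := by
  have := isFiniteMeasure_mixture x
  have hint : Integrable φ (mixture x) :=
    .of_bound hφm.aestronglyMeasurable C (.of_forall hφ)
  have hterm : ∀ μ : P1 E, ∫ v, φ v ∂(ENNReal.ofReal (x μ) * (shiftedMoment μ.1)⁻¹) • μ.1 =
      x μ • (shiftedMoment μ.1).toReal⁻¹ • ∫ v, φ v ∂μ.1 := fun μ => by
    rw [integral_smul_measure, ENNReal.toReal_mul, ENNReal.toReal_ofReal (hx μ),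
      ENNReal.toReal_inv, smul_smul]
  refine (hasSum_integral_measure hint).unique ?_
  simp_rw [hterm]
  exact hasSum_ell1Lift (P1.norm_inv_shiftedMoment_smul_integral_le hφ) x

theorem mixture_convexCombination {x y : ℓ¹(P1 E, ℝ)} (hx : ∀ μ, 0 ≤ x μ) (hy : ∀ μ, 0 ≤ y μ)
    {τ : ℝ} (hτ : τ ∈ Icc 0 1) :
    mixture ((1 - τ) • x + τ • y : ℓ¹(P1 E, ℝ)) =
      ENNReal.ofReal (1 - τ) • mixture x + ENNReal.ofReal τ • mixture y := by
  have hτ' : 0 ≤ 1 - τ := sub_nonneg.2 hτ.2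
  rw [← mixture_smul hτ', ← mixture_smul hτ.1]
  exact mixture_add (fun μ => mul_nonneg hτ' (hx μ)) fun μ => mul_nonneg hτ.1 (hy μ)

theorem isProbabilityMeasure_mixture_iff {x : ℓ¹(P1 E, ℝ)} (hx : ∀ μ, 0 ≤ x μ) :
    IsProbabilityMeasure (mixture x) ↔
      mixtureIntegral (φ := fun _ : E => 1) (C := 1) (fun _ => by simp) x = 1 := by
  have hmass : ∫ _, 1 ∂(mixture x) =
      mixtureIntegral (φ := fun _ : E => 1) (C := 1) (fun _ => by simp) x :=
    integral_mixture measurable_const _ hx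
  rw [← hmass, isProbabilityMeasure_iff_real]
  simp

/-- The nonnegative coefficients of norm at most `R` whose mixture is a probability measure. -/
def probabilityCoeffs (E : Type*) [NormedAddCommGroup E] [MeasurableSpace E] (R : ℝ) :
    Set (ℓ¹(P1 E, ℝ)) :=
  {x | (∀ μ, 0 ≤ x μ) ∧ IsProbabilityMeasure (mixture x) ∧ ‖x‖ ≤ R}

theorem isClosed_probabilityCoeffs (R : ℝ) : IsClosed (probabilityCoeffs E R) := by
  have hset : probabilityCoeffs E R = (⋂ μ, {x | 0 ≤ x μ}) ∩
      ({x | mixtureIntegral (φ := fun _ : E => 1) (C := 1) (fun _ => by simp) x = 1} ∩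
        {x | ‖x‖ ≤ R}) := by
    ext x
    simp only [probabilityCoeffs, mem_inter_iff, mem_iInter, mem_ofPred_eq]
    exact and_congr_right fun hx => and_congr_left' (isProbabilityMeasure_mixture_iff hx)
  rw [hset]
  exact (isClosed_iInter fun μ => isClosed_le continuous_const
      (lp.evalCLM ℝ (fun _ : P1 E => ℝ) 1 μ).continuous).inter <|
    (isClosed_eq (ContinuousLinearMap.continuous _) continuous_const).inter
      (isClosed_le continuous_norm continuous_const)

theorem P1.pure_mem_probabilityCoeffs (μ : P1 E) : μ.pure ∈ probabilityCoeffs E ‖μ.pure‖ :=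
  ⟨μ.pure_nonneg, μ.mixture_pure.symm ▸ μ.2.1, le_rfl⟩

theorem probabilityCoeffs_subset_closedBall (R : ℝ) :
    probabilityCoeffs E R ⊆ Metric.closedBall 0 R :=
  fun _ hx => mem_closedBall_zero_iff.2 hx.2.2

theorem probabilityCoeffs_mono {R R' : ℝ} (hR : R ≤ R') :
    probabilityCoeffs E R ⊆ probabilityCoeffs E R' :=
  fun _ hx => ⟨hx.1, hx.2.1, hx.2.2.trans hR⟩

end Mixtures

section GainOperator

variable {E Θ : Type*} [MeasurableSpace E] [MeasurableSpace Θ] {𝒞 : E → E → Θ → E}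
  {b : Measure Θ} {K : ℝ≥0}

theorem lintegral_Qgain [SFinite b]
    (h𝒞 : Measurable fun p : (E × E) × Θ => 𝒞 p.1.1 p.1.2 p.2) (f g : Measure E) [SFinite g]
    {φ : E → ℝ≥0∞} (hφ : Measurable φ) :
    ∫⁻ v, φ v ∂(Qgain 𝒞 b f g) = ∫⁻ v, ∫⁻ w, ∫⁻ θ, φ (𝒞 v w θ) ∂b ∂g ∂f := by
  have hφ𝒞 : Measurable fun p : (E × E) × Θ => φ (𝒞 p.1.1 p.1.2 p.2) := hφ.comp h𝒞
  rw [Qgain, lintegral_map hφ h𝒞, lintegral_prod _ hφ𝒞.aemeasurable,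
    lintegral_prod _ hφ𝒞.lintegral_prod_right'.aemeasurable]

variable [NormedAddCommGroup E]

/-- A measurable collision law whose post-collisional velocity has, on average over the collision
parameter, at most linear growth in the pre-collisional velocities. -/
structure HasMeanLinearGrowth (𝒞 : E → E → Θ → E) (b : Measure Θ) (K : ℝ≥0) : Prop where
  measurable : Measurable fun p : (E × E) × Θ => 𝒞 p.1.1 p.1.2 p.2
  lintegral_enorm_le : ∀ v w, ∫⁻ θ, ‖𝒞 v w θ‖ₑ ∂b ≤ K * (1 + ‖v‖ₑ + ‖w‖ₑ)

namespace HasMeanLinearGrowth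

variable [IsProbabilityMeasure b]

theorem isProbabilityMeasure_Qgain (h : HasMeanLinearGrowth 𝒞 b K) (f g : Measure E)
    [IsProbabilityMeasure f] [IsProbabilityMeasure g] : IsProbabilityMeasure (Qgain 𝒞 b f g) :=
  Measure.isProbabilityMeasure_map h.measurable.aemeasurable

variable [BorelSpace E]

theorem shiftedMoment_Qgain_le (h : HasMeanLinearGrowth 𝒞 b K) (f g : Measure E)
    [IsProbabilityMeasure f] [IsProbabilityMeasure g] :
    shiftedMoment (Qgain 𝒞 b f g) ≤ (K + 1) * (shiftedMoment f + shiftedMoment g) := by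
  have hmean : ∀ v w, ∫⁻ θ, (1 + ‖𝒞 v w θ‖ₑ) ∂b ≤ (K + 1) * ((1 + ‖v‖ₑ) + (1 + ‖w‖ₑ)) :=
    fun v w => by
    rw [lintegral_add_left measurable_const, lintegral_one, measure_univ]
    calc 1 + ∫⁻ θ, ‖𝒞 v w θ‖ₑ ∂b ≤ 1 + K * (1 + ‖v‖ₑ + ‖w‖ₑ) := by
          gcongr; exact h.lintegral_enorm_le v w
      _ ≤ (K + 1) * (1 + ‖v‖ₑ + ‖w‖ₑ) := by
          rw [add_mul, one_mul, add_comm, add_assoc]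
          gcongr
          exact le_self_add
      _ ≤ (K + 1) * ((1 + ‖v‖ₑ) + (1 + ‖w‖ₑ)) := by
          gcongr; exact le_add_self
  calc shiftedMoment (Qgain 𝒞 b f g)
      = ∫⁻ v, ∫⁻ w, ∫⁻ θ, (1 + ‖𝒞 v w θ‖ₑ) ∂b ∂g ∂f :=
        lintegral_Qgain h.measurable f g (by fun_prop)
    _ ≤ ∫⁻ v, ∫⁻ w, (K + 1) * ((1 + ‖v‖ₑ) + (1 + ‖w‖ₑ)) ∂g ∂f :=
        lintegral_mono fun v => lintegral_mono fun w => hmean v w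
    _ = (K + 1) * (shiftedMoment f + shiftedMoment g) := by
        have hK : (K + 1 : ℝ≥0∞) ≠ ∞ := by simp
        have hinner : ∀ v : E, ∫⁻ w, ((1 + ‖v‖ₑ) + (1 + ‖w‖ₑ)) ∂g =
            (1 + ‖v‖ₑ) + shiftedMoment g := fun v => by
          rw [lintegral_add_left measurable_const, lintegral_const, measure_univ, mul_one,
            shiftedMoment]
        simp only [lintegral_const_mul' _ _ hK, hinner]
        rw [lintegral_add_right _ measurable_const, lintegral_const, measure_univ, mul_one,
          ← shiftedMoment]

/-- The gain term as a product on `P₁(E)`. -/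
def collide (h : HasMeanLinearGrowth 𝒞 b K) (μ ν : P1 E) : P1 E :=
  ⟨Qgain 𝒞 b μ.1 ν.1, h.isProbabilityMeasure_Qgain μ.1 ν.1,
    ne_top_of_le_ne_top (ENNReal.mul_ne_top (by simp) (ENNReal.add_ne_top.2 ⟨μ.2.2, ν.2.2⟩))
      (h.shiftedMoment_Qgain_le μ.1 ν.1)⟩

/-- The gain term of the unit coefficients of `μ` and `ν`, which stand for the measures
`μ / shiftedMoment μ` and `ν / shiftedMoment ν`. -/
def pairGain (h : HasMeanLinearGrowth 𝒞 b K) (μ ν : P1 E) : ℓ¹(P1 E, ℝ) :=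
  ((shiftedMoment μ.1).toReal⁻¹ * (shiftedMoment ν.1).toReal⁻¹) • (h.collide μ ν).pure

theorem pairGain_nonneg (h : HasMeanLinearGrowth 𝒞 b K) (μ ν ξ : P1 E) :
    0 ≤ h.pairGain μ ν ξ :=
  mul_nonneg (by positivity) (P1.pure_nonneg _ _)

theorem norm_pairGain_le (h : HasMeanLinearGrowth 𝒞 b K) (μ ν : P1 E) :
    ‖h.pairGain μ ν‖ ≤ (2 * (K + 1) : ℝ≥0) := by
  have hmom : (shiftedMoment (h.collide μ ν).1).toReal ≤
      (K + 1) * ((shiftedMoment μ.1).toReal + (shiftedMoment ν.1).toReal) := by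
    have hK : (K + 1 : ℝ≥0∞).toReal = K + 1 := by norm_cast
    rw [← ENNReal.toReal_add μ.2.2 ν.2.2, ← hK, ← ENNReal.toReal_mul]
    exact ENNReal.toReal_mono
      (ENNReal.mul_ne_top (by simp) (ENNReal.add_ne_top.2 ⟨μ.2.2, ν.2.2⟩))
      (h.shiftedMoment_Qgain_le μ.1 ν.1)
  rw [pairGain, norm_smul, P1.norm_pure]
  have hμ := μ.one_le_toReal_shiftedMoment
  have hν := ν.one_le_toReal_shiftedMoment
  set m := (shiftedMoment μ.1).toReal
  set n := (shiftedMoment ν.1).toReal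
  rw [Real.norm_of_nonneg (by positivity)]
  calc m⁻¹ * n⁻¹ * (shiftedMoment (h.collide μ ν).1).toReal
      ≤ m⁻¹ * n⁻¹ * ((K + 1) * (m + n)) := by gcongr
    _ = (K + 1) * (n⁻¹ + m⁻¹) := by field_simp
    _ ≤ (K + 1) * (1 + 1) := by
        gcongr <;> exact inv_le_one_of_one_le₀ ‹_›
    _ = (2 * (K + 1) : ℝ≥0) := by push_cast; ring

/-- The bilinear gain operator on coefficients: `gain x y` represents `Q⁺` of the mixtures
represented by `x` and `y`. -/
def gain (h : HasMeanLinearGrowth 𝒞 b K) : ℓ¹(P1 E, ℝ) →L[ℝ] ℓ¹(P1 E, ℝ) →L[ℝ] ℓ¹(P1 E, ℝ) :=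
  ell1Lift (fun μ => ell1Lift (h.pairGain μ) (h.norm_pairGain_le μ)) fun _ => norm_ell1Lift_le _

theorem norm_gain_le (h : HasMeanLinearGrowth 𝒞 b K) : ‖h.gain‖ ≤ 2 * (K + 1) := by
  simpa [gain] using norm_ell1Lift_le fun μ => norm_ell1Lift_le (h.norm_pairGain_le μ)

theorem hasSum_gain (h : HasMeanLinearGrowth 𝒞 b K) (x y : ℓ¹(P1 E, ℝ)) :
    HasSum (fun μ => x μ • ell1Lift (h.pairGain μ) (h.norm_pairGain_le μ) y) (h.gain x y) :=
  hasSum_ell1Lift_apply (fun μ => norm_ell1Lift_le (h.norm_pairGain_le μ)) x y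

variable {x y : ℓ¹(P1 E, ℝ)}

theorem ell1Lift_pairGain_nonneg (h : HasMeanLinearGrowth 𝒞 b K) (hy : ∀ ν, 0 ≤ y ν) (μ ξ : P1 E) :
    0 ≤ ell1Lift (h.pairGain μ) (h.norm_pairGain_le μ) y ξ :=
  (hasSum_apply_of_hasSum_ell1 (hasSum_ell1Lift _ y) ξ).nonneg fun ν =>
    mul_nonneg (hy ν) (h.pairGain_nonneg μ ν ξ)

theorem gain_nonneg (h : HasMeanLinearGrowth 𝒞 b K) (hx : ∀ μ, 0 ≤ x μ) (hy : ∀ ν, 0 ≤ y ν)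
    (ξ : P1 E) : 0 ≤ h.gain x y ξ :=
  (hasSum_apply_of_hasSum_ell1 (h.hasSum_gain x y) ξ).nonneg fun μ =>
    mul_nonneg (hx μ) (h.ell1Lift_pairGain_nonneg hy μ ξ)

theorem lintegral_mixture_gain (h : HasMeanLinearGrowth 𝒞 b K) (hx : ∀ μ, 0 ≤ x μ)
    (hy : ∀ ν, 0 ≤ y ν) (φ : E → ℝ≥0∞) :
    ∫⁻ v, φ v ∂(mixture (h.gain x y)) =
      ∑' μ, ENNReal.ofReal (x μ) * ∑' ν, ENNReal.ofReal (y ν) *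
        ((shiftedMoment μ.1)⁻¹ * (shiftedMoment ν.1)⁻¹ * ∫⁻ v, φ v ∂(Qgain 𝒞 b μ.1 ν.1)) := by
  rw [lintegral_mixture, tsum_ofReal_mul_of_hasSum_ell1 hx (h.ell1Lift_pairGain_nonneg hy)
    (h.hasSum_gain x y)]
  congr! 3 with μ
  rw [tsum_ofReal_mul_of_hasSum_ell1 hy (h.pairGain_nonneg μ) (hasSum_ell1Lift _ y)]
  congr! 3 with ν
  have hinv : ∀ ξ : P1 E, ENNReal.ofReal (shiftedMoment ξ.1).toReal⁻¹ = (shiftedMoment ξ.1)⁻¹ :=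
    fun ξ => by
      rw [← ENNReal.toReal_inv,
        ENNReal.ofReal_toReal (ENNReal.inv_ne_top.2 ξ.shiftedMoment_ne_zero)]
  have hcoeff : ∀ ξ, ENNReal.ofReal (h.pairGain μ ν ξ) =
      (shiftedMoment μ.1)⁻¹ * (shiftedMoment ν.1)⁻¹ *
        ENNReal.ofReal ((h.collide μ ν).pure ξ) := fun ξ => by
    rw [← hinv, ← hinv, ← ENNReal.ofReal_mul (by positivity), ← ENNReal.ofReal_mul (by positivity)]
    rfl
  simp only [hcoeff, mul_assoc _ (ENNReal.ofReal ((h.collide μ ν).pure _)), ENNReal.tsum_mul_left]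
  rw [P1.tsum_ofReal_pure_mul, ← mul_assoc (shiftedMoment _),
    mul_comm (shiftedMoment _), P1.shiftedMoment_inv_mul_shiftedMoment, one_mul]
  rfl

theorem mixture_gain (h : HasMeanLinearGrowth 𝒞 b K) (hx : ∀ μ, 0 ≤ x μ) (hy : ∀ ν, 0 ≤ y ν) :
    mixture (h.gain x y) = Qgain 𝒞 b (mixture x) (mixture y) := by
  have := isFiniteMeasure_mixture x
  have := isFiniteMeasure_mixture y
  refine Measure.ext_of_lintegral _ fun φ hφ => ?_
  have hφ𝒞 : Measurable fun p : E × E => ∫⁻ θ, φ (𝒞 p.1 p.2 θ) ∂b :=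
    (hφ.comp h.measurable).lintegral_prod_right'
  rw [h.lintegral_mixture_gain hx hy, lintegral_Qgain h.measurable _ _ hφ, lintegral_mixture]
  refine tsum_congr fun μ => ?_
  rw [lintegral_lintegral_swap hφ𝒞.aemeasurable, lintegral_mixture]
  simp only [← ENNReal.tsum_mul_left]
  refine tsum_congr fun ν => ?_
  have hswap : Measurable fun p : E × E => ∫⁻ θ, φ (𝒞 p.2 p.1 θ) ∂b := hφ𝒞.comp measurable_swap
  rw [lintegral_lintegral_swap hswap.aemeasurable, ← lintegral_Qgain h.measurable _ _ hφ]
  ring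

theorem norm_gain_self_le (h : HasMeanLinearGrowth 𝒞 b K) (hx : ∀ μ, 0 ≤ x μ)
    [IsProbabilityMeasure (mixture x)] : ‖h.gain x x‖ ≤ 2 * (K + 1) * ‖x‖ := by
  have hmom := h.shiftedMoment_Qgain_le (mixture x) (mixture x)
  rw [← h.mixture_gain hx hx, shiftedMoment_mixture_of_nonneg hx,
    shiftedMoment_mixture_of_nonneg (h.gain_nonneg hx hx)] at hmom
  have hreal := ENNReal.toReal_mono (by finiteness) hmom
  have hK : (K + 1 : ℝ≥0∞).toReal = K + 1 := by norm_cast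
  rw [ENNReal.toReal_mul, hK, ENNReal.toReal_add enorm_ne_top enorm_ne_top, toReal_enorm,
    toReal_enorm] at hreal
  linarith

end HasMeanLinearGrowth

end GainOperator

section WeakFormulation

variable {E Θ : Type*} [MeasurableSpace E] [MeasurableSpace Θ] {𝒞 : E → E → Θ → E}
  {b : Measure Θ}

theorem Qgain_flip (h𝒞 : Measurable fun p : (E × E) × Θ => 𝒞 p.1.1 p.1.2 p.2) (f g : Measure E)
    [SFinite b] [SFinite f] [SFinite g] :
    Qgain (fun v w => 𝒞 w v) b f g = Qgain 𝒞 b g f := by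
  have hswap : MeasurePreserving (Prod.map Prod.swap id) ((f.prod g).prod b) ((g.prod f).prod b) :=
    Measure.measurePreserving_swap.prod (.id b)
  rw [Qgain, Qgain, ← hswap.map_eq, Measure.map_map h𝒞 hswap.measurable]
  rfl

theorem collRHS_eq_integral_Qgain_sub
    (h𝒞 : Measurable fun p : (E × E) × Θ => 𝒞 p.1.1 p.1.2 p.2) (f : Measure E)
    [IsProbabilityMeasure b] [IsProbabilityMeasure f] {φ : E → ℝ} {C : ℝ} (hφm : Measurable φ)
    (hφ : ∀ v, ‖φ v‖ ≤ C) :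
    collRHS 𝒞 b f φ = ∫ v, φ v ∂(Qgain 𝒞 b f f) - ∫ v, φ v ∂f := by
  have h𝒞' : Measurable fun p : (E × E) × Θ => 𝒞 p.1.2 p.1.1 p.2 :=
    h𝒞.comp (measurable_swap.prodMap measurable_id)
  have hint : ∀ ψ : (E × E) × Θ → E, Measurable ψ →
      Integrable (fun p => φ (ψ p)) ((f.prod f).prod b) := fun ψ hψ =>
    .of_bound (hφm.comp hψ).aestronglyMeasurable C (.of_forall fun p => hφ (ψ p))
  have hgain : ∫ p, φ (𝒞 p.1.1 p.1.2 p.2) ∂((f.prod f).prod b) = ∫ v, φ v ∂(Qgain 𝒞 b f f) :=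
    (integral_map h𝒞.aemeasurable hφm.aestronglyMeasurable).symm
  have hgain' : ∫ p, φ (𝒞 p.1.2 p.1.1 p.2) ∂((f.prod f).prod b) =
      ∫ v, φ v ∂(Qgain 𝒞 b f f) := by
    rw [← Qgain_flip h𝒞]
    exact (integral_map h𝒞'.aemeasurable hφm.aestronglyMeasurable).symm
  have hfst : ∫ p, φ p.1.1 ∂((f.prod f).prod b) = ∫ v, φ v ∂f := by
    simp [integral_fun_fst fun q : E × E => φ q.1, integral_fun_fst φ]
  have hsnd : ∫ p, φ p.1.2 ∂((f.prod f).prod b) = ∫ v, φ v ∂f := by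
    simp [integral_fun_fst fun q : E × E => φ q.2, integral_fun_snd φ]
  have hsum : Integrable (fun p => φ (𝒞 p.1.1 p.1.2 p.2) + φ (𝒞 p.1.2 p.1.1 p.2))
      ((f.prod f).prod b) := (hint _ h𝒞).add (hint _ h𝒞')
  have hdiff : Integrable (fun p => φ (𝒞 p.1.1 p.1.2 p.2) + φ (𝒞 p.1.2 p.1.1 p.2) - φ p.1.1)
      ((f.prod f).prod b) := hsum.sub (hint _ (by fun_prop))
  rw [collRHS, integral_sub hdiff (hint _ (by fun_prop)), integral_sub hsum (hint _ (by fun_prop)),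
    integral_add (hint _ h𝒞) (hint _ h𝒞'), hgain, hgain', hfst, hsnd]
  ring

variable [NormedAddCommGroup E]

/-- A weak solution on `[0, T]` of the collision equation `∂ₜ f = Q(f, f)` with values in `P₁(E)`,
continuous for `W1`. The equation is integrated in time and tested against every bounded measurable
function. -/
structure IsWeakMeasureSolution (𝒞 : E → E → Θ → E) (b : Measure Θ) (T : ℝ) (f : ℝ → Measure E) :
    Prop where
  isProbabilityMeasure : ∀ t ∈ Icc 0 T, IsProbabilityMeasure (f t)
  integrable_norm : ∀ t ∈ Icc 0 T, Integrable (fun v => ‖v‖) (f t)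
  tendsto_W1 : ∀ t ∈ Icc 0 T, Tendsto (fun s => W1 (f s) (f t)) (𝓝[Icc 0 T] t) (𝓝 0)
  integral_sub : ∀ φ : E → ℝ, Measurable φ → (∃ C, ∀ v, ‖φ v‖ ≤ C) → ∀ t ∈ Icc 0 T,
    ∫ v, φ v ∂(f t) - ∫ v, φ v ∂(f 0) = ∫ s in 0..t, collRHS 𝒞 b (f s) φ

theorem IsWeakMeasureSolution.isWeakSol {d m : ℕ} {𝒞 : Vec d → Vec d → Vec m → Vec d}
    {b : Measure (Vec m)} {T : ℝ} {f : ℝ → Measure (Vec d)}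
    (h : IsWeakMeasureSolution 𝒞 b T f) : IsWeakSol 𝒞 b T f := by
  refine ⟨h.isProbabilityMeasure, h.integrable_norm, fun t ht ε hε => ?_, fun φ hφ hφc =>
    h.integral_sub φ hφ.continuous.measurable (hφc.exists_bound_of_continuous hφ.continuous)⟩
  obtain ⟨δ, hδ, hball⟩ := Metric.mem_nhdsWithin_iff.1 ((h.tendsto_W1 t ht).eventually_lt_const hε)
  exact ⟨δ, hδ, fun s hs hst => hball ⟨hst, hs⟩⟩

end WeakFormulation

section CollisionFlow

variable {E Θ : Type*} [NormedAddCommGroup E] [MeasurableSpace E] [BorelSpace E]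
  [MeasurableSpace Θ] {𝒞 : E → E → Θ → E} {b : Measure Θ} [IsProbabilityMeasure b] {K : ℝ≥0}
  {x : ℓ¹(P1 E, ℝ)} {R τ h t T : ℝ}

namespace HasMeanLinearGrowth

/-- The vector field `x ↦ Q⁺(x, x) - x` of the collision equation, on coefficients. -/
def field (h𝒞 : HasMeanLinearGrowth 𝒞 b K) (x : ℓ¹(P1 E, ℝ)) : ℓ¹(P1 E, ℝ) := h𝒞.gain x x - x

theorem lipschitzOnWith_field (h𝒞 : HasMeanLinearGrowth 𝒞 b K) (R : ℝ≥0) :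
    LipschitzOnWith (2 * (K + 1) * (R + R) + 1) h𝒞.field (Metric.closedBall 0 R) := by
  refine .of_dist_le_mul fun x hx y hy => ?_
  rw [mem_closedBall_zero_iff] at hx hy
  have hbilin : h𝒞.gain x x - h𝒞.gain y y = h𝒞.gain (x - y) x + h𝒞.gain y (x - y) := by
    rw [map_sub, map_sub, sub_apply]
    abel
  have hleft : ‖h𝒞.gain (x - y) x‖ ≤ 2 * (K + 1) * ‖x - y‖ * R :=
    (h𝒞.gain.le_opNorm₂ _ _).trans (by gcongr; exact h𝒞.norm_gain_le)
  have hright : ‖h𝒞.gain y (x - y)‖ ≤ 2 * (K + 1) * R * ‖x - y‖ :=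
    (h𝒞.gain.le_opNorm₂ _ _).trans (by gcongr; exact h𝒞.norm_gain_le)
  rw [dist_eq_norm, dist_eq_norm, field, field, sub_sub_sub_comm, hbilin]
  calc ‖h𝒞.gain (x - y) x + h𝒞.gain y (x - y) - (x - y)‖
      ≤ ‖h𝒞.gain (x - y) x‖ + ‖h𝒞.gain y (x - y)‖ + ‖x - y‖ :=
        (norm_sub_le _ _).trans (by gcongr; exact norm_add_le _ _)
    _ ≤ (2 * (K + 1) * (R + R) + 1 : ℝ≥0) * ‖x - y‖ := by push_cast; linarith

theorem norm_field_le (h𝒞 : HasMeanLinearGrowth 𝒞 b K) (hx : x ∈ probabilityCoeffs E R) :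
    ‖h𝒞.field x‖ ≤ (2 * (K + 1) + 1) * R := by
  obtain ⟨hx₀, hprob, hxR⟩ := hx
  calc ‖h𝒞.field x‖ ≤ ‖h𝒞.gain x x‖ + ‖x‖ := norm_sub_le _ _
    _ ≤ 2 * (K + 1) * ‖x‖ + ‖x‖ := by gcongr; exact h𝒞.norm_gain_self_le hx₀
    _ = (2 * (K + 1) + 1) * ‖x‖ := by ring
    _ ≤ (2 * (K + 1) + 1) * R := by gcongr

theorem eulerStep_field (h𝒞 : HasMeanLinearGrowth 𝒞 b K) (τ : ℝ) (x : ℓ¹(P1 E, ℝ)) :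
    eulerStep h𝒞.field τ x = (1 - τ) • x + τ • h𝒞.gain x x := by
  rw [eulerStep, field]
  module

theorem mixture_eulerStep (h𝒞 : HasMeanLinearGrowth 𝒞 b K) (hx : ∀ μ, 0 ≤ x μ)
    (hτ : τ ∈ Icc 0 1) :
    mixture ⇑(eulerStep h𝒞.field τ x) =
      ENNReal.ofReal (1 - τ) • mixture x +
        ENNReal.ofReal τ • Qgain 𝒞 b (mixture x) (mixture x) := by
  rw [h𝒞.eulerStep_field, mixture_convexCombination hx (h𝒞.gain_nonneg hx hx) hτ,
    h𝒞.mixture_gain hx hx]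

theorem eulerStep_mem (h𝒞 : HasMeanLinearGrowth 𝒞 b K) (hx : x ∈ probabilityCoeffs E R)
    (hτ : τ ∈ Icc 0 1) :
    eulerStep h𝒞.field τ x ∈ probabilityCoeffs E (Real.exp (2 * (K + 1) * τ) * R) := by
  obtain ⟨hx₀, hprob, hxR⟩ := hx
  have hτ' : 0 ≤ 1 - τ := sub_nonneg.2 hτ.2
  have : 0 ≤ R := (norm_nonneg x).trans hxR
  refine ⟨fun μ => ?_, ⟨?_⟩, ?_⟩
  · rw [h𝒞.eulerStep_field]
    exact add_nonneg (mul_nonneg hτ' (hx₀ μ)) (mul_nonneg hτ.1 (h𝒞.gain_nonneg hx₀ hx₀ μ))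
  · have hgain := h𝒞.isProbabilityMeasure_Qgain (mixture x) (mixture x)
    rw [h𝒞.mixture_eulerStep hx₀ hτ]
    simp [← ENNReal.ofReal_add hτ' hτ.1]
  · calc ‖eulerStep h𝒞.field τ x‖ ≤ ‖(1 - τ) • x‖ + ‖τ • h𝒞.gain x x‖ := by
          rw [h𝒞.eulerStep_field]
          exact norm_add_le _ _
      _ ≤ (1 - τ) * ‖x‖ + τ * (2 * (K + 1) * ‖x‖) := by
          rw [norm_smul, norm_smul, Real.norm_of_nonneg hτ', Real.norm_of_nonneg hτ.1]
          gcongr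
          · exact hτ.1
          · exact h𝒞.norm_gain_self_le hx₀
      _ ≤ (2 * (K + 1) * τ + 1) * ‖x‖ := by nlinarith [mul_nonneg hτ.1 (norm_nonneg x)]
      _ ≤ Real.exp (2 * (K + 1) * τ) * R := by
          gcongr
          exact Real.add_one_le_exp _

theorem iterate_eulerStep_mem (h𝒞 : HasMeanLinearGrowth 𝒞 b K) (hx : x ∈ probabilityCoeffs E R)
    (hh : h ∈ Icc 0 1) (n : ℕ) : (eulerStep h𝒞.field h)^[n] x ∈
      probabilityCoeffs E (Real.exp (2 * (K + 1) * (n * h)) * R) := by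
  induction n with
  | zero => simpa using hx
  | succ n ih =>
    have hexp : Real.exp (2 * (K + 1) * h) * (Real.exp (2 * (K + 1) * (n * h)) * R) =
        Real.exp (2 * (K + 1) * ((n + 1 : ℕ) * h)) * R := by
      rw [← mul_assoc (Real.exp _), ← Real.exp_add]
      push_cast
      ring_nf
    rw [Function.iterate_succ_apply', ← hexp]
    exact h𝒞.eulerStep_mem ih hh

theorem eulerPolygon_mem (h𝒞 : HasMeanLinearGrowth 𝒞 b K) (hx : x ∈ probabilityCoeffs E R)
    (hh : h ∈ Ioc 0 1) (ht : t ∈ Icc 0 T) : eulerPolygon h𝒞.field x h t ∈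
      probabilityCoeffs E (Real.exp (2 * (K + 1) * T) * R) := by
  have hfloor := mem_Ico_floor_mul hh.1 ht.1
  have hτ : t - ⌊t / h⌋₊ * h ∈ Icc 0 1 := ⟨sub_nonneg.2 hfloor.1, by linarith [hfloor.2, hh.2]⟩
  have hR : 0 ≤ R := (norm_nonneg x).trans hx.2.2
  refine probabilityCoeffs_mono ?_
    (h𝒞.eulerStep_mem (h𝒞.iterate_eulerStep_mem hx (Ioc_subset_Icc_self hh) _) hτ)
  rw [← mul_assoc, ← Real.exp_add, ← mul_add, sub_add_cancel]
  gcongr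
  exact ht.2

theorem eulerSeq_mixture (h𝒞 : HasMeanLinearGrowth 𝒞 b K) (hx : x ∈ probabilityCoeffs E R)
    (hh : h ∈ Icc 0 1) (n : ℕ) :
    eulerSeq 𝒞 b (mixture x) h n = mixture ((eulerStep h𝒞.field h)^[n] x) := by
  induction n with
  | zero => rfl
  | succ n ih =>
    rw [Function.iterate_succ_apply',
      h𝒞.mixture_eulerStep (h𝒞.iterate_eulerStep_mem hx hh n).1 hh, ← ih, eulerSeq]

theorem eulerInterp_mixture (h𝒞 : HasMeanLinearGrowth 𝒞 b K) (hx : x ∈ probabilityCoeffs E R)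
    (hh : h ∈ Ioc 0 1) (ht : 0 ≤ t) :
    eulerInterp 𝒞 b (mixture x) h t = mixture ⇑(eulerPolygon h𝒞.field x h t) := by
  have hfloor := mem_Ico_floor_mul hh.1 ht
  have hmem := h𝒞.iterate_eulerStep_mem hx (Ioc_subset_Icc_self hh)
  have hτ : (t - ⌊t / h⌋₊ * h) / h ∈ Icc 0 1 :=
    ⟨div_nonneg (sub_nonneg.2 hfloor.1) hh.1.le, (div_le_one hh.1).2 (by linarith [hfloor.2])⟩
  rw [eulerInterp, Int.floor_toNat, h𝒞.eulerSeq_mixture hx (Ioc_subset_Icc_self hh),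
    h𝒞.eulerSeq_mixture hx (Ioc_subset_Icc_self hh),
    ← mixture_convexCombination (hmem _).1 (hmem _).1 hτ, Function.iterate_succ_apply',
    eulerStep_convexCombination, div_mul_cancel₀ _ hh.1.ne', eulerPolygon]

theorem exists_isApproxTrajectory_field (h𝒞 : HasMeanLinearGrowth 𝒞 b K)
    (hx : x ∈ probabilityCoeffs E R) (hT : 0 ≤ T) :
    ∃ (R' : ℝ≥0) (p : ℝ → ℓ¹(P1 E, ℝ)),
      IsApproxTrajectory h𝒞.field (probabilityCoeffs E R') x T 0 p ∧
      ∃ C, ∀ h ∈ Ioc 0 1, ∀ t ∈ Icc 0 T, dist (eulerPolygon h𝒞.field x h t) (p t) ≤ C * h := by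
  have hR : 0 ≤ R := (norm_nonneg x).trans hx.2.2
  let R' : ℝ≥0 := ⟨Real.exp (2 * (K + 1) * T) * R, by positivity⟩
  let Λ : ℝ≥0 := 2 * (K + 1) * (R' + R') + 1
  let M : ℝ := (2 * (K + 1) + 1) * R'
  have : 0 ≤ M := by positivity
  have hfield : LipschitzOnWith Λ h𝒞.field (probabilityCoeffs E R') :=
    (h𝒞.lipschitzOnWith_field R').mono (probabilityCoeffs_subset_closedBall _)
  have hpolygon : ∀ h ∈ Ioc 0 1, IsApproxTrajectory h𝒞.field (probabilityCoeffs E R') x T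
      (Λ * (h * M)) (eulerPolygon h𝒞.field x h) := fun h hh =>
    isApproxTrajectory_eulerPolygon hh.1 hfield (fun _ => h𝒞.norm_field_le) fun _ =>
      h𝒞.eulerPolygon_mem hx hh
  have hmesh : Tendsto (fun n : ℕ => Λ * (1 / ((n : ℝ) + 1) * M)) atTop (𝓝 0) := by
    simpa using (tendsto_one_div_add_atTop_nhds_zero_nat.mul_const M).const_mul (Λ : ℝ)
  obtain ⟨p, hp⟩ := IsApproxTrajectory.exists_of_tendsto_zero hT (isClosed_probabilityCoeffs _)
    hfield (fun n => by positivity) hmesh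
    fun n => hpolygon _ ⟨by positivity, div_le_one_of_le₀ (by linarith) (by positivity)⟩
  refine ⟨R', p, hp, Λ * M * gronwallBound 0 Λ 1 T, fun h hh t ht => ?_⟩
  have hε : 0 ≤ Λ * (h * M) := by
    have := hh.1
    positivity
  exact ((hpolygon h hh).dist_le hfield hp hε le_rfl ht).trans_eq (by ring)

theorem isWeakMeasureSolution_mixture [SecondCountableTopology E]
    (h𝒞 : HasMeanLinearGrowth 𝒞 b K) {x₀ : ℓ¹(P1 E, ℝ)} {R : ℝ≥0} {p : ℝ → ℓ¹(P1 E, ℝ)}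
    (hp : IsApproxTrajectory h𝒞.field (probabilityCoeffs E R) x₀ T 0 p) :
    IsWeakMeasureSolution 𝒞 b T fun t => mixture (p t) where
  isProbabilityMeasure t ht := (hp.mem t ht).2.1
  integrable_norm t ht := by
    refine integrable_norm_of_shiftedMoment_ne_top ?_
    rw [shiftedMoment_mixture_of_nonneg (hp.mem t ht).1]
    exact enorm_ne_top
  tendsto_W1 t ht := by
    have hnorm : Tendsto (fun s => ‖p s - p t‖) (𝓝[Icc 0 T] t) (𝓝 0) :=
      tendsto_iff_norm_sub_tendsto_zero.1 (hp.continuousOn t ht)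
    refine tendsto_of_tendsto_of_tendsto_of_le_of_le' tendsto_const_nhds hnorm
      (.of_forall fun s => W1_nonneg _ _) (eventually_mem_nhdsWithin.mono fun s hs => ?_)
    have := (hp.mem s hs).2.1
    have := (hp.mem t ht).2.1
    exact W1_mixture_le (hp.mem s hs).1 (hp.mem t ht).1 (by simp)
  integral_sub φ hφm hφ t ht := by
    obtain ⟨C, hC⟩ := hφ
    have hC' : ∀ v, ‖φ v‖ ≤ C.toNNReal := fun v => (hC v).trans (Real.le_coe_toNNReal C)
    have hT : 0 ∈ Icc 0 T := ⟨le_rfl, ht.1.trans ht.2⟩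
    have hfield : ContinuousOn h𝒞.field (probabilityCoeffs E R) :=
      (h𝒞.lipschitzOnWith_field R).continuousOn.mono (probabilityCoeffs_subset_closedBall _)
    rw [integral_mixture hφm hC' (hp.mem t ht).1, integral_mixture hφm hC' (hp.mem 0 hT).1,
      ← map_sub, hp.sub_eq_integral hfield ht,
      ← ContinuousLinearMap.intervalIntegral_comp_comm _ (hp.intervalIntegrable hfield ht)]
    refine intervalIntegral.integral_congr fun s hs => ?_
    rw [uIcc_of_le ht.1] at hs
    obtain ⟨hs₀, hsprob, -⟩ := hp.mem s ⟨hs.1, hs.2.trans ht.2⟩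
    rw [collRHS_eq_integral_Qgain_sub h𝒞.measurable _ hφm hC, ← h𝒞.mixture_gain hs₀ hs₀,
      integral_mixture hφm hC' hs₀, integral_mixture hφm hC' (h𝒞.gain_nonneg hs₀ hs₀), ← map_sub,
      field]

end HasMeanLinearGrowth

theorem weak_solution_existence_general [SecondCountableTopology E]
    (h𝒞 : HasMeanLinearGrowth 𝒞 b K) (f₀ : Measure E) [IsProbabilityMeasure f₀]
    (hf₀ : Integrable (fun v => ‖v‖) f₀) (hT : 0 ≤ T) :
    ∃ f : ℝ → Measure E, f 0 = f₀ ∧ IsWeakMeasureSolution 𝒞 b T f ∧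
      ∃ C, ∀ h ∈ Ioc 0 1, ∀ t ∈ Icc 0 T, W1 (eulerInterp 𝒞 b f₀ h t) (f t) ≤ C * h := by
  let μ : P1 E := ⟨f₀, ‹_›, shiftedMoment_ne_top_of_integrable_norm hf₀⟩
  obtain ⟨R, p, hp, C, hC⟩ :=
    h𝒞.exists_isApproxTrajectory_field μ.pure_mem_probabilityCoeffs hT
  refine ⟨fun t => mixture (p t), by simp [hp.initial, μ, P1.mixture_pure],
    h𝒞.isWeakMeasureSolution_mixture hp, C, fun h hh t ht => ?_⟩
  have hpolygon := h𝒞.eulerPolygon_mem μ.pure_mem_probabilityCoeffs hh ht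
  have := hpolygon.2.1
  have := (hp.mem t ht).2.1
  calc W1 (eulerInterp 𝒞 b f₀ h t) (mixture (p t))
      = W1 (mixture ⇑(eulerPolygon h𝒞.field μ.pure h t)) (mixture ⇑(p t)) := by
        rw [← h𝒞.eulerInterp_mixture μ.pure_mem_probabilityCoeffs hh ht.1, μ.mixture_pure]
    _ ≤ ‖eulerPolygon h𝒞.field μ.pure h t - p t‖ :=
        W1_mixture_le hpolygon.1 (hp.mem t ht).1 (by simp)
    _ ≤ C * h := by
        rw [← dist_eq_norm]
        exact hC h hh t ht

end CollisionFlow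

theorem hasMeanLinearGrowth_of_ae_norm_le {E Θ : Type*} [NormedAddCommGroup E] [MeasurableSpace E]
    [SeminormedAddCommGroup Θ] [MeasurableSpace Θ] {𝒞 : E → E → Θ → E} {b : Measure Θ}
    [IsProbabilityMeasure b] {A C : ℝ} (hC : 0 ≤ C) (hb : ∀ᵐ θ ∂b, ‖θ‖ ≤ A)
    (h𝒞 : Measurable fun p : (E × E) × Θ => 𝒞 p.1.1 p.1.2 p.2)
    (hgrow : ∀ v w θ, ‖𝒞 v w θ‖ ≤ C * (1 + ‖θ‖) * (‖v‖ + ‖w‖)) :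
    HasMeanLinearGrowth 𝒞 b (C * (1 + A)).toNNReal where
  measurable := h𝒞
  lintegral_enorm_le v w := by
    have hpoint : ∀ᵐ θ ∂b, ‖𝒞 v w θ‖ₑ ≤ (C * (1 + A)).toNNReal * (1 + ‖v‖ₑ + ‖w‖ₑ) := by
      filter_upwards [hb] with θ hθ
      have hCA : 0 ≤ C * (1 + A) := mul_nonneg hC (by linarith [norm_nonneg θ])
      have hle : ‖𝒞 v w θ‖ ≤ C * (1 + A) * (1 + ‖v‖ + ‖w‖) :=
        (hgrow v w θ).trans (by gcongr; linarith)
      rw [← ofReal_norm, ← ofReal_norm, ← ofReal_norm, ← ENNReal.ofReal_one,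
        ← ENNReal.ofReal_add zero_le_one (norm_nonneg _),
        ← ENNReal.ofReal_add (by positivity) (norm_nonneg _)]
      exact (ENNReal.ofReal_le_ofReal hle).trans_eq (ENNReal.ofReal_mul hCA)
    simpa using lintegral_mono_ae hpoint

/-- existence of a weak measure solution of the Boltzmann-type
equation, obtained as the uniform-in-time Wasserstein-1 limit of the
piecewise-linear forward Euler interpolants with `Δt_k = T/2^k`. -/
theorem weak_solution_existence (d m : ℕ) (b : Measure (Vec m)) [IsProbabilityMeasure b]
    (Mb Lc Cc : ℝ) (hMb : 0 ≤ Mb) (hLc : 0 < Lc) (hCc : 0 < Cc)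
    (hb : ∀ᵐ θ ∂b, ‖θ‖ ≤ Mb)
    (𝒞 : Vec d → Vec d → Vec m → Vec d)
    (hmeas : Measurable fun p : (Vec d × Vec d) × Vec m => 𝒞 p.1.1 p.1.2 p.2)
    (hlip : ∀ v vs w ws θ,
      ‖𝒞 v vs θ - 𝒞 w ws θ‖ ≤ Lc * (1 + ‖θ‖) * (‖v - w‖ + ‖vs - ws‖))
    (hgrow : ∀ v vs θ, ‖𝒞 v vs θ‖ ≤ Cc * (1 + ‖θ‖) * (‖v‖ + ‖vs‖))
    (f₀ : Measure (Vec d)) [IsProbabilityMeasure f₀]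
    (hf₀ : Integrable (fun v : Vec d => ‖v‖) f₀)
    (T : ℝ) (hT : 0 < T) :
    ∃ f : ℝ → Measure (Vec d), f 0 = f₀ ∧ IsWeakSol 𝒞 b T f ∧
      ∀ ε > (0:ℝ), ∃ K : ℕ, ∀ k ≥ K, ∀ t ∈ Set.Icc (0:ℝ) T,
        W1 (eulerInterp 𝒞 b f₀ (T / 2 ^ k) t) (f t) ≤ ε := by
  obtain ⟨f, hf, hsol, C, hC⟩ := weak_solution_existence_general
    (hasMeanLinearGrowth_of_ae_norm_le hCc.le hb hmeas hgrow) f₀ hf₀ hT.le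
  refine ⟨f, hf, hsol.isWeakSol, fun ε hε => eventually_atTop.1 ?_⟩
  have hstep : Tendsto (fun k : ℕ => T / 2 ^ k) atTop (𝓝 0) :=
    tendsto_const_nhds.div_atTop (tendsto_pow_atTop_atTop_of_one_lt one_lt_two)
  have hrate : Tendsto (fun k : ℕ => C * (T / 2 ^ k)) atTop (𝓝 0) := by
    simpa using hstep.const_mul C
  filter_upwards [hstep.eventually_le_const one_pos, hrate.eventually_le_const hε]
    with k hk hkε t ht
  exact (hC _ ⟨by positivity, hk⟩ t ht).trans hkε

end
end

section
/- (Uniqueness of weak measure solutions.) Under the assumptions that b is a probability measure on Θ with bounded support and 𝒞 satisfies the Lipschitz condition |𝒞(v,v*,θ)−𝒞(w,w*,θ)| ≤ L_𝒞(1+|θ|)(|v−w|+|v*−w*|) and linear growth |𝒞(v,v*,θ)| ≤ C_𝒞(1+|θ|)(|v|+|v*|), let f₁, f₂ ∈ C([0,T], P₁(ℝ^d)) be two weak measure solutions of ∂_t f = Q(f,f) on [0,T] with the same initial datum f₁(0) = f₂(0) = f₀ ∈ P₁(ℝ^d). Then f₁(t) = f₂(t) for all t ∈ [0,T]. -/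
open MeasureTheory ProbabilityTheory Set
open scoped ENNReal

noncomputable section

/-!
The loss and gain terms of a Maxwellian kernel with finite mass are bounded in total variation:
testing against `|φ| ≤ M` produces a measurable integrand bounded by `4 M`. Hence, for two solutions
issued from the same datum, the total variation of `f₁ t - f₂ t` is at most `4 b(Θ)` times the time
integral of itself. Iterating this from the trivial bound `2` gives `2 (4 b(Θ) t)ⁿ / n!` for every
`n`, which tends to `0`; working with a sequence of bounds rather than with the norm avoids having
to show that the norm is measurable in time.

The weak formulation only sees smooth compactly supported functions, while the collision integrand
is merely measurable, so such bounds are first extended to all bounded measurable functions by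
density in `L¹(f₁ t + f₂ t)`. Wasserstein continuity makes `t ↦ f t` measurable.
-/

open Filter
open scoped Topology NNReal BoundedContinuousFunction

section TotalVariation

variable {E F : Type*} [MeasurableSpace E] [MeasurableSpace F]

/-- The total variation norm of `μ - ν` is at most `a`, in dual form. It is meant for finite
measures, for which the integrals below are never junk values. The norm is that of the signed
measure, so two mutually singular probability measures are at distance `2`. -/
def TotalVariationLE (μ ν : Measure E) (a : ℝ) : Prop :=
  ∀ ψ : E → ℝ, Measurable ψ → ∀ M, (∀ v, |ψ v| ≤ M) → |∫ v, ψ v ∂μ - ∫ v, ψ v ∂ν| ≤ M * a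

lemma integrable_of_abs_le {μ : Measure E} [IsFiniteMeasure μ] {ψ : E → ℝ} (hψ : Measurable ψ)
    {M : ℝ} (hM : ∀ v, |ψ v| ≤ M) : Integrable ψ μ :=
  .of_bound hψ.aestronglyMeasurable M (.of_forall hM)

lemma abs_integral_le_of_abs_le {μ : Measure E} [IsFiniteMeasure μ] {ψ : E → ℝ} {M : ℝ}
    (hM : ∀ v, |ψ v| ≤ M) : |∫ v, ψ v ∂μ| ≤ M * μ.real univ := by
  rw [← Real.norm_eq_abs]
  exact norm_integral_le_of_norm_le_const (.of_forall hM)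

namespace TotalVariationLE

variable {μ μ' ρ : Measure E} {ν ν' : Measure F} {a a' : ℝ}

lemma of_isFiniteMeasure (μ ρ : Measure E) [IsFiniteMeasure μ] [IsFiniteMeasure ρ] :
    TotalVariationLE μ ρ (μ.real univ + ρ.real univ) := fun ψ _ M hM =>
  calc |∫ v, ψ v ∂μ - ∫ v, ψ v ∂ρ| ≤ |∫ v, ψ v ∂μ| + |∫ v, ψ v ∂ρ| := abs_sub _ _
    _ ≤ M * μ.real univ + M * ρ.real univ :=
        add_le_add (abs_integral_le_of_abs_le hM) (abs_integral_le_of_abs_le hM)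
    _ = M * (μ.real univ + ρ.real univ) := by ring

lemma trans (h : TotalVariationLE μ μ' a) (h' : TotalVariationLE μ' ρ a') :
    TotalVariationLE μ ρ (a + a') := fun ψ hψ M hM =>
  (abs_sub_le _ (∫ v, ψ v ∂μ') _).trans <| by
    rw [mul_add]
    exact add_le_add (h ψ hψ M hM) (h' ψ hψ M hM)

lemma map (h : TotalVariationLE μ μ' a) {g : E → F} (hg : Measurable g) :
    TotalVariationLE (μ.map g) (μ'.map g) a := fun ψ hψ M hM => by
  rw [integral_map hg.aemeasurable hψ.aestronglyMeasurable,
    integral_map hg.aemeasurable hψ.aestronglyMeasurable]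
  exact h _ (hψ.comp hg) M fun v => hM (g v)

lemma prod_right [IsFiniteMeasure μ] [IsFiniteMeasure μ'] (h : TotalVariationLE μ μ' a)
    (ν : Measure F) [IsFiniteMeasure ν] :
    TotalVariationLE (μ.prod ν) (μ'.prod ν) (ν.real univ * a) := fun ψ hψ M hM => by
  rw [integral_prod _ (integrable_of_abs_le hψ hM), integral_prod _ (integrable_of_abs_le hψ hM),
    ← mul_assoc]
  exact h _ hψ.stronglyMeasurable.integral_prod_right'.measurable _ fun v =>
    abs_integral_le_of_abs_le fun w => hM (v, w)

lemma prod_left [IsFiniteMeasure ν] [IsFiniteMeasure ν'] (h : TotalVariationLE ν ν' a)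
    (μ : Measure E) [IsFiniteMeasure μ] :
    TotalVariationLE (μ.prod ν) (μ.prod ν') (μ.real univ * a) := by
  rw [← Measure.prod_swap (μ := ν) (ν := μ), ← Measure.prod_swap (μ := ν') (ν := μ)]
  exact (h.prod_right μ).map measurable_swap

lemma prod [IsFiniteMeasure μ] [IsFiniteMeasure μ'] [IsFiniteMeasure ν] [IsFiniteMeasure ν']
    (h : TotalVariationLE μ μ' a) (h' : TotalVariationLE ν ν' a') :
    TotalVariationLE (μ.prod ν) (μ'.prod ν') (ν.real univ * a + μ'.real univ * a') :=
  (h.prod_right ν).trans (h'.prod_left μ')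

lemma of_tendsto {u : ℕ → ℝ} (h : ∀ n, TotalVariationLE μ μ' (u n))
    (hu : Tendsto u atTop (𝓝 a)) : TotalVariationLE μ μ' a := fun ψ hψ M hM =>
  ge_of_tendsto' (hu.const_mul M) fun n => h n ψ hψ M hM

lemma eq_of_zero [IsFiniteMeasure μ] [IsFiniteMeasure μ'] (h : TotalVariationLE μ μ' 0) :
    μ = μ' := by
  refine Measure.ext fun s hs => ?_
  have hs' := h (s.indicator 1) (measurable_one.indicator hs) 1 fun v => by
    by_cases hv : v ∈ s <;> simp [hv]
  rw [integral_indicator_one hs, integral_indicator_one hs, mul_zero, abs_nonpos_iff,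
    sub_eq_zero] at hs'
  exact (measureReal_eq_measureReal_iff).1 hs'

end TotalVariationLE

end TotalVariation

section SmoothTestFunctions

variable {E : Type*} [NormedAddCommGroup E] [NormedSpace ℝ E] [FiniteDimensional ℝ E]
  [MeasurableSpace E] [BorelSpace E]

lemma exists_continuous_hasCompactSupport_abs_le_integral_abs_sub_le (μ : Measure E)
    [IsFiniteMeasure μ] {ψ : E → ℝ} (hψ : Measurable ψ) {M : ℝ} (hM : ∀ v, |ψ v| ≤ M) {ε : ℝ}
    (hε : 0 < ε) :
    ∃ g : E → ℝ, Continuous g ∧ HasCompactSupport g ∧ (∀ v, |g v| ≤ M) ∧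
      ∫ v, |ψ v - g v| ∂μ ≤ ε := by
  have hψi : Integrable ψ μ := integrable_of_abs_le hψ hM
  obtain ⟨g, hgs, hgε, hgc, hgi⟩ := hψi.exists_hasCompactSupport_integral_sub_le hε
  have hM0 : 0 ≤ M := (abs_nonneg _).trans (hM 0)
  let clip : ℝ → ℝ := fun x => projIcc (-M) M (by linarith) x
  have hclip : ∀ x, |clip x| ≤ M := fun x => abs_le.2 (projIcc (-M) M _ x).2
  have hclip_eq : ∀ x, |x| ≤ M → clip x = x := fun x hx =>
    congrArg Subtype.val (projIcc_of_mem _ (abs_le.1 hx))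
  have hcloser : ∀ v, |ψ v - clip (g v)| ≤ |ψ v - g v| := fun v => by
    nth_rw 1 [← hclip_eq (ψ v) (hM v)]
    exact abs_projIcc_sub_projIcc _
  have hclipg : Continuous (clip ∘ g) := (continuous_subtype_val.comp continuous_projIcc).comp hgc
  refine ⟨clip ∘ g, hclipg, hgs.comp_left (hclip_eq 0 (by simpa using hM0)),
    fun v => hclip (g v), ?_⟩
  exact (integral_mono (hψi.sub (integrable_of_abs_le hclipg.measurable fun v => hclip (g v))).abs
    (hψi.sub hgi).abs hcloser).trans hgε

lemma exists_contDiff_hasCompactSupport_abs_le_integral_abs_sub_le (μ : Measure E)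
    [IsFiniteMeasure μ] {ψ : E → ℝ} (hψ : Measurable ψ) {M : ℝ} (hM : ∀ v, |ψ v| ≤ M) {ε : ℝ}
    (hε : 0 < ε) :
    ∃ φ : E → ℝ, ContDiff ℝ (⊤ : ℕ∞) φ ∧ HasCompactSupport φ ∧ (∀ v, |φ v| ≤ M + ε) ∧
      ∫ v, |ψ v - φ v| ∂μ ≤ ε * (1 + μ.real univ) := by
  obtain ⟨g, hgc, hgs, hgM, hgε⟩ :=
    exists_continuous_hasCompactSupport_abs_le_integral_abs_sub_le μ hψ hM hε
  obtain ⟨φ, hφ, hφg, hφs⟩ := hgc.exists_contDiff_approx ⊤ (ε := fun _ => ε) continuous_const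
    fun _ => hε
  have hφg' : ∀ v, |φ v - g v| ≤ ε := fun v => (hφg v).le
  have hφM : ∀ v, |φ v| ≤ M + ε := fun v => by
    linarith [abs_sub_abs_le_abs_sub (φ v) (g v), hφg' v, hgM v]
  have hψi : Integrable ψ μ := integrable_of_abs_le hψ hM
  have hgi : Integrable g μ := integrable_of_abs_le hgc.measurable hgM
  have hφi : Integrable φ μ := integrable_of_abs_le hφ.continuous.measurable hφM
  refine ⟨φ, hφ, hgs.mono hφs, hφM, ?_⟩
  calc ∫ v, |ψ v - φ v| ∂μ ≤ ∫ v, (|ψ v - g v| + ε) ∂μ := by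
        refine integral_mono (hψi.sub hφi).abs ((hψi.sub hgi).abs.add (integrable_const ε))
          fun v => ?_
        exact (abs_sub_le _ (g v) _).trans (by gcongr; rw [abs_sub_comm]; exact hφg' v)
    _ = ∫ v, |ψ v - g v| ∂μ + μ.real univ * ε := by
        rw [← smul_eq_mul, ← integral_const]
        exact integral_add (hψi.sub hgi).abs (integrable_const ε)
    _ ≤ ε * (1 + μ.real univ) := by linarith

lemma TotalVariationLE.of_forall_contDiff {μ ν : Measure E} [IsFiniteMeasure μ]
    [IsFiniteMeasure ν] {a : ℝ}
    (h : ∀ φ : E → ℝ, ContDiff ℝ (⊤ : ℕ∞) φ → HasCompactSupport φ → ∀ M, (∀ v, |φ v| ≤ M) →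
      |∫ v, φ v ∂μ - ∫ v, φ v ∂ν| ≤ M * a) :
    TotalVariationLE μ ν a := by
  intro ψ hψ M hM
  have happrox : ∀ ε > 0, |∫ v, ψ v ∂μ - ∫ v, ψ v ∂ν| ≤
      (M + ε) * a + ε * (1 + (μ + ν).real univ) := fun ε hε => by
    obtain ⟨φ, hφ, hφs, hφM, hφε⟩ :=
      exists_contDiff_hasCompactSupport_abs_le_integral_abs_sub_le (μ + ν) hψ hM hε
    have hφm := hφ.continuous.measurable
    have hi : ∀ (κ : Measure E) [IsFiniteMeasure κ], Integrable (fun v => ψ v - φ v) κ :=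
      fun κ _ => (integrable_of_abs_le hψ hM).sub (integrable_of_abs_le hφm hφM)
    have herr : ∀ (κ : Measure E) [IsFiniteMeasure κ],
        |∫ v, ψ v ∂κ - ∫ v, φ v ∂κ| ≤ ∫ v, |ψ v - φ v| ∂κ := fun κ _ => by
      rw [← integral_sub (integrable_of_abs_le hψ hM) (integrable_of_abs_le hφm hφM)]
      exact abs_integral_le_integral_abs
    rw [integral_add_measure (hi μ).abs (hi ν).abs] at hφε
    have hνφ := herr ν
    rw [abs_sub_comm] at hνφ
    linarith [abs_sub_le (∫ v, ψ v ∂μ) (∫ v, φ v ∂μ) (∫ v, ψ v ∂ν),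
      abs_sub_le (∫ v, φ v ∂μ) (∫ v, φ v ∂ν) (∫ v, ψ v ∂ν), herr μ, h φ hφ hφs _ hφM]
  have hlim : Tendsto (fun ε : ℝ => (M + ε) * a + ε * (1 + (μ + ν).real univ)) (𝓝[>] 0)
      (𝓝 (M * a)) :=
    (Continuous.tendsto' (by fun_prop) _ _ (by ring)).mono_left nhdsWithin_le_nhds
  exact ge_of_tendsto hlim (eventually_mem_nhdsWithin.mono happrox)

end SmoothTestFunctions

section Wasserstein

variable {E : Type*} [NormedAddCommGroup E] [MeasurableSpace E] [BorelSpace E]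

lemma integrable_of_lipschitzWith {μ : Measure E} [IsFiniteMeasure μ]
    (hμ : Integrable (fun v => ‖v‖) μ) {K : ℝ≥0} {ψ : E → ℝ} (hψ : LipschitzWith K ψ) :
    Integrable ψ μ := by
  refine ((integrable_const |ψ 0|).add (hμ.const_mul K)).mono'
    hψ.continuous.measurable.aestronglyMeasurable (.of_forall fun v => ?_)
  have hv := hψ.norm_sub_le v 0
  rw [sub_zero] at hv
  exact (norm_le_norm_add_norm_sub' (ψ v) (ψ 0)).trans (add_le_add le_rfl hv)

lemma abs_integral_sub_le_mul_W1 [SecondCountableTopology E] {μ ν : Measure E}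
    [IsProbabilityMeasure μ] [IsProbabilityMeasure ν] (hμ : Integrable (fun v => ‖v‖) μ)
    (hν : Integrable (fun v => ‖v‖) ν) {K : ℝ≥0} {ψ : E → ℝ} (hψ : LipschitzWith K ψ) :
    |∫ v, ψ v ∂μ - ∫ v, ψ v ∂ν| ≤ K * W1 μ ν := by
  rw [W1, ← smul_eq_mul, ← Real.sInf_smul_of_nonneg K.coe_nonneg]
  refine le_csInf (Set.Nonempty.smul_set ⟨_, μ.prod ν, by simp, by simp, rfl⟩) ?_
  rintro _ ⟨_, ⟨γ, rfl, rfl, rfl⟩, rfl⟩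
  have hψm := hψ.continuous.measurable.stronglyMeasurable
  have hi₁ : Integrable (fun p => ψ p.1) γ :=
    (integrable_of_lipschitzWith hμ hψ).comp_measurable measurable_fst
  have hi₂ : Integrable (fun p => ψ p.2) γ :=
    (integrable_of_lipschitzWith hν hψ).comp_measurable measurable_snd
  have hi : Integrable (fun p : E × E => ‖p.1 - p.2‖) γ :=
    ((hμ.comp_measurable measurable_fst).add (hν.comp_measurable measurable_snd)).mono'
      (by fun_prop) (.of_forall fun p => by simpa using norm_sub_le p.1 p.2)
  rw [integral_map measurable_fst.aemeasurable hψm.aestronglyMeasurable,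
    integral_map measurable_snd.aemeasurable hψm.aestronglyMeasurable, ← integral_sub hi₁ hi₂]
  calc |∫ p, (ψ p.1 - ψ p.2) ∂γ| ≤ ∫ p, |ψ p.1 - ψ p.2| ∂γ := abs_integral_le_integral_abs
    _ ≤ ∫ p, K * ‖p.1 - p.2‖ ∂γ :=
        integral_mono (hi₁.sub hi₂).abs (hi.const_mul K) fun p => hψ.norm_sub_le p.1 p.2
    _ = K * ∫ p, ‖p.1 - p.2‖ ∂γ := integral_const_mul _ _

end Wasserstein

lemma measurable_measure_of_forall_lipschitzWith {X E : Type*} [MeasurableSpace X]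
    [PseudoEMetricSpace E] [MeasurableSpace E] [BorelSpace E] {f : X → Measure E}
    [∀ x, IsProbabilityMeasure (f x)]
    (h : ∀ ψ : E →ᵇ ℝ≥0, (∃ K, LipschitzWith K ψ) → Measurable fun x => ∫ v, (ψ v : ℝ) ∂f x) :
    Measurable f := by
  refine .measure_of_isPiSystem_of_isProbabilityMeasure
    ((BorelSpace.measurable_eq (α := E)).trans borel_eq_generateFrom_isClosed) isPiSystem_isClosed
    fun s hs => ?_
  have hδ : ∀ n : ℕ, 0 < 1 / ((n : ℝ) + 1) := fun n => by positivity
  have hreal : Measurable fun x => (f x).real s :=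
    measurable_of_tendsto_metrizable
      (fun n => h (thickenedIndicator (hδ n) s) ⟨_, lipschitzWith_thickenedIndicator (hδ n) s⟩)
      (tendsto_pi_nhds.2 fun x => tendsto_integral_thickenedIndicator_of_isClosed (f x) hs hδ
        tendsto_one_div_add_atTop_nhds_zero_nat)
  simpa [ofReal_measureReal] using hreal.ennreal_ofReal

section CollisionOperator

variable {E P : Type*} {𝒞 : E → E → P → E} {φ : E → ℝ} {M : ℝ}

/-- The change of the observable `φ` in a collision: the integrand of `collRHS`, as a function of
`((v, v*), θ)`. -/
def collIncrement (𝒞 : E → E → P → E) (φ : E → ℝ) (p : (E × E) × P) : ℝ :=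
  φ (𝒞 p.1.1 p.1.2 p.2) + φ (𝒞 p.1.2 p.1.1 p.2) - φ p.1.1 - φ p.1.2

lemma abs_collIncrement_le (hM : ∀ v, |φ v| ≤ M) (p : (E × E) × P) :
    |collIncrement 𝒞 φ p| ≤ 4 * M := by
  have hv := fun v => abs_le.1 (hM v)
  rw [collIncrement, abs_le]
  constructor <;> linarith [hv (𝒞 p.1.1 p.1.2 p.2), hv (𝒞 p.1.2 p.1.1 p.2), hv p.1.1, hv p.1.2]

variable [MeasurableSpace E] [MeasurableSpace P] {b : Measure P}

lemma collRHS_eq_integral_collIncrement (μ : Measure E) :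
    collRHS 𝒞 b μ φ = 1 / 2 * ∫ p, collIncrement 𝒞 φ p ∂((μ.prod μ).prod b) :=
  rfl

lemma measurable_collIncrement
    (h𝒞 : Measurable fun p : (E × E) × P => 𝒞 p.1.1 p.1.2 p.2) (hφ : Measurable φ) :
    Measurable (collIncrement 𝒞 φ) := by
  have h𝒞' : Measurable fun p : (E × E) × P => 𝒞 p.1.2 p.1.1 p.2 :=
    h𝒞.comp (f := fun p : (E × E) × P => (p.1.swap, p.2)) (by fun_prop)
  exact (((hφ.comp h𝒞).add (hφ.comp h𝒞')).sub (by fun_prop)).sub (by fun_prop)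

lemma abs_collRHS_le [IsFiniteMeasure b] (μ : Measure E) [IsProbabilityMeasure μ]
    (hM : ∀ v, |φ v| ≤ M) : |collRHS 𝒞 b μ φ| ≤ 2 * b.real univ * M := by
  have hint : |∫ p, collIncrement 𝒞 φ p ∂((μ.prod μ).prod b)| ≤ 4 * M * b.real univ := by
    have hmass : ((μ.prod μ).prod b).real univ = b.real univ := by
      rw [← univ_prod_univ, measureReal_prod_prod, probReal_univ, one_mul]
    rw [← hmass]
    exact abs_integral_le_of_abs_le (abs_collIncrement_le hM)
  rw [collRHS_eq_integral_collIncrement, abs_mul, abs_of_pos one_half_pos]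
  linarith

lemma TotalVariationLE.abs_collRHS_sub_le [IsFiniteMeasure b] {μ ν : Measure E}
    [IsProbabilityMeasure μ] [IsProbabilityMeasure ν] {a : ℝ} (h : TotalVariationLE μ ν a)
    (h𝒞 : Measurable fun p : (E × E) × P => 𝒞 p.1.1 p.1.2 p.2) (hφ : Measurable φ)
    (hM : ∀ v, |φ v| ≤ M) :
    |collRHS 𝒞 b μ φ - collRHS 𝒞 b ν φ| ≤ M * (4 * b.real univ * a) := by
  have hint := ((h.prod h).prod_right b) _ (measurable_collIncrement h𝒞 hφ) _
    (abs_collIncrement_le hM)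
  rw [probReal_univ (μ := μ), probReal_univ (μ := ν)] at hint
  rw [collRHS_eq_integral_collIncrement, collRHS_eq_integral_collIncrement, ← mul_sub, abs_mul,
    abs_of_pos one_half_pos]
  linarith

lemma measurable_collRHS_kernel [SFinite b] {X : Type*} [MeasurableSpace X] (κ : Kernel X E)
    [IsSFiniteKernel κ] (h𝒞 : Measurable fun p : (E × E) × P => 𝒞 p.1.1 p.1.2 p.2)
    (hφ : Measurable φ) : Measurable fun x => collRHS 𝒞 b (κ x) φ := by
  have hint := (measurable_collIncrement h𝒞 hφ).stronglyMeasurable.integral_kernel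
    (κ := (κ ×ₖ κ) ×ₖ Kernel.const X b)
  simp only [Kernel.prod_apply, Kernel.const_apply] at hint
  exact hint.measurable.const_mul _

end CollisionOperator

namespace IsWeakSol

variable {d m : ℕ} {𝒞 : Vec d → Vec d → Vec m → Vec d} {b : Measure (Vec m)} {T : ℝ}
  {f f₁ f₂ : ℝ → Measure (Vec d)}

lemma continuous_integral (hf : IsWeakSol 𝒞 b T f) {K : ℝ≥0} {ψ : Vec d → ℝ}
    (hψ : LipschitzWith K ψ) : Continuous fun s : Icc 0 T => ∫ v, ψ v ∂f s := by
  obtain ⟨hprob, hmom, hW, -⟩ := hf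
  refine Metric.continuous_iff.2 fun t ε hε => ?_
  obtain ⟨δ, hδ, hs⟩ := hW t t.2 (ε / (K + 1)) (by positivity)
  refine ⟨δ, hδ, fun s hst => ?_⟩
  have := hprob s s.2
  have := hprob t t.2
  calc dist (∫ v, ψ v ∂f s) (∫ v, ψ v ∂f t) ≤ K * W1 (f s) (f t) :=
        abs_integral_sub_le_mul_W1 (hmom s s.2) (hmom t t.2) hψ
    _ ≤ K * (ε / (K + 1)) := by gcongr; exact (hs s s.2 hst).le
    _ < ε := by
        rw [mul_div_assoc', div_lt_iff₀ (by positivity)]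
        linarith

lemma measurable (hf : IsWeakSol 𝒞 b T f) : Measurable fun s : Icc 0 T => f s := by
  have hprob : ∀ s : Icc 0 T, IsProbabilityMeasure (f s) := fun s => hf.1 s s.2
  refine measurable_measure_of_forall_lipschitzWith ?_
  rintro ψ ⟨K, hψ⟩
  exact (hf.continuous_integral (NNReal.isometry_coe.lipschitz.comp hψ)).measurable

lemma intervalIntegrable_collRHS [IsFiniteMeasure b] (hf : IsWeakSol 𝒞 b T f)
    (h𝒞 : Measurable fun p : (Vec d × Vec d) × Vec m => 𝒞 p.1.1 p.1.2 p.2) {φ : Vec d → ℝ}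
    (hφ : Measurable φ) {M : ℝ} (hM : ∀ v, |φ v| ≤ M) {t : ℝ} (ht : t ∈ Icc 0 T) :
    IntervalIntegrable (fun s => collRHS 𝒞 b (f s) φ) volume 0 t := by
  let κ : Kernel (Icc 0 T) (Vec d) := ⟨fun s => f s, hf.measurable⟩
  have : IsMarkovKernel κ := ⟨fun s => hf.1 s s.2⟩
  have hmeas : AEMeasurable (fun s => collRHS 𝒞 b (f s) φ) (volume.restrict (Icc 0 T)) :=
    aemeasurable_restrict_of_measurable_subtype measurableSet_Icc
      (measurable_collRHS_kernel κ h𝒞 hφ)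
  have hint : IntegrableOn (fun s => collRHS 𝒞 b (f s) φ) (Icc 0 T) :=
    .of_bound measure_Icc_lt_top hmeas.aestronglyMeasurable _ <|
      (ae_restrict_mem measurableSet_Icc).mono fun s hs =>
        have := hf.1 s hs
        abs_collRHS_le (f s) hM
  rw [intervalIntegrable_iff_integrableOn_Icc_of_le ht.1]
  exact hint.mono_set (Icc_subset_Icc_right ht.2)

lemma integral_sub_integral_eq [IsFiniteMeasure b] (h₁ : IsWeakSol 𝒞 b T f₁)
    (h₂ : IsWeakSol 𝒞 b T f₂) (h0 : f₁ 0 = f₂ 0)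
    (h𝒞 : Measurable fun p : (Vec d × Vec d) × Vec m => 𝒞 p.1.1 p.1.2 p.2) {φ : Vec d → ℝ}
    (hφ : ContDiff ℝ (⊤ : ℕ∞) φ) (hφs : HasCompactSupport φ) {t : ℝ} (ht : t ∈ Icc 0 T) :
    ∫ v, φ v ∂f₁ t - ∫ v, φ v ∂f₂ t =
      ∫ s in (0 : ℝ)..t, (collRHS 𝒞 b (f₁ s) φ - collRHS 𝒞 b (f₂ s) φ) := by
  obtain ⟨M, hM⟩ := hφs.exists_bound_of_continuous hφ.continuous
  have hφm := hφ.continuous.measurable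
  rw [intervalIntegral.integral_sub (h₁.intervalIntegrable_collRHS h𝒞 hφm hM ht)
    (h₂.intervalIntegrable_collRHS h𝒞 hφm hM ht), ← h₁.2.2.2 φ hφ hφs t ht,
    ← h₂.2.2.2 φ hφ hφs t ht, h0]
  ring

lemma totalVariationLE_integral [IsFiniteMeasure b] (h₁ : IsWeakSol 𝒞 b T f₁)
    (h₂ : IsWeakSol 𝒞 b T f₂) (h0 : f₁ 0 = f₂ 0)
    (h𝒞 : Measurable fun p : (Vec d × Vec d) × Vec m => 𝒞 p.1.1 p.1.2 p.2) {t : ℝ}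
    (ht : t ∈ Icc 0 T) {g : ℝ → ℝ} (hg : IntervalIntegrable g volume 0 t)
    (hfg : ∀ s ∈ Icc 0 t, TotalVariationLE (f₁ s) (f₂ s) (g s)) :
    TotalVariationLE (f₁ t) (f₂ t) (4 * b.real univ * ∫ s in (0 : ℝ)..t, g s) := by
  have := h₁.1 t ht
  have := h₂.1 t ht
  refine .of_forall_contDiff fun φ hφ hφs M hM => ?_
  have hbound : ∀ s ∈ Ioc 0 t,
      ‖collRHS 𝒞 b (f₁ s) φ - collRHS 𝒞 b (f₂ s) φ‖ ≤ M * (4 * b.real univ * g s) := fun s hs => by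
    have hsT : s ∈ Icc 0 T := ⟨hs.1.le, hs.2.trans ht.2⟩
    have := h₁.1 s hsT
    have := h₂.1 s hsT
    exact (hfg s (Ioc_subset_Icc_self hs)).abs_collRHS_sub_le h𝒞 hφ.continuous.measurable hM
  rw [h₁.integral_sub_integral_eq h₂ h0 h𝒞 hφ hφs ht, ← intervalIntegral.integral_const_mul,
    ← intervalIntegral.integral_const_mul]
  exact intervalIntegral.norm_integral_le_of_norm_le ht.1 (.of_forall hbound)
    ((hg.const_mul _).const_mul _)

lemma totalVariationLE_pow_div_factorial [IsFiniteMeasure b] (h₁ : IsWeakSol 𝒞 b T f₁)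
    (h₂ : IsWeakSol 𝒞 b T f₂) (h0 : f₁ 0 = f₂ 0)
    (h𝒞 : Measurable fun p : (Vec d × Vec d) × Vec m => 𝒞 p.1.1 p.1.2 p.2) (n : ℕ) {t : ℝ}
    (ht : t ∈ Icc 0 T) :
    TotalVariationLE (f₁ t) (f₂ t) (2 * ((4 * b.real univ * t) ^ n / n.factorial)) := by
  induction n generalizing t with
  | zero =>
    have := h₁.1 t ht
    have := h₂.1 t ht
    simpa [one_add_one_eq_two] using TotalVariationLE.of_isFiniteMeasure (f₁ t) (f₂ t)
  | succ n ih =>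
    have hiter := h₁.totalVariationLE_integral h₂ h0 h𝒞 ht
      (g := fun s => 2 * ((4 * b.real univ * s) ^ n / n.factorial))
      (Continuous.intervalIntegrable (by fun_prop) _ _)
      fun s hs => ih ⟨hs.1, hs.2.trans ht.2⟩
    convert! hiter using 1
    simp only [mul_pow, intervalIntegral.integral_const_mul, intervalIntegral.integral_div,
      integral_pow, Nat.factorial_succ, Nat.cast_mul, Nat.cast_succ]
    field_simp
    ring

end IsWeakSol

theorem weak_solution_uniqueness_general {d m : ℕ} {b : Measure (Vec m)} [IsFiniteMeasure b]
    {𝒞 : Vec d → Vec d → Vec m → Vec d}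
    (h𝒞 : Measurable fun p : (Vec d × Vec d) × Vec m => 𝒞 p.1.1 p.1.2 p.2)
    {T : ℝ} {f₁ f₂ : ℝ → Measure (Vec d)} (h₁ : IsWeakSol 𝒞 b T f₁) (h₂ : IsWeakSol 𝒞 b T f₂)
    (h0 : f₁ 0 = f₂ 0) {t : ℝ} (ht : t ∈ Icc 0 T) :
    f₁ t = f₂ t := by
  have := h₁.1 t ht
  have := h₂.1 t ht
  have hlim : Tendsto (fun n : ℕ => 2 * ((4 * b.real univ * t) ^ n / n.factorial)) atTop
      (𝓝 0) := by
    simpa using (FloorSemiring.tendsto_pow_div_factorial_atTop (4 * b.real univ * t)).const_mul 2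
  exact (TotalVariationLE.of_tendsto
    (fun n => h₁.totalVariationLE_pow_div_factorial h₂ h0 h𝒞 n ht) hlim).eq_of_zero

/-- uniqueness of weak measure solutions with the same initial datum. -/
theorem weak_solution_uniqueness (d m : ℕ) (b : Measure (Vec m)) [IsProbabilityMeasure b]
    (Mb Lc Cc : ℝ) (hMb : 0 ≤ Mb) (hLc : 0 < Lc) (hCc : 0 < Cc)
    (hb : ∀ᵐ θ ∂b, ‖θ‖ ≤ Mb)
    (𝒞 : Vec d → Vec d → Vec m → Vec d)
    (hmeas : Measurable fun p : (Vec d × Vec d) × Vec m => 𝒞 p.1.1 p.1.2 p.2)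
    (hlip : ∀ v vs w ws θ,
      ‖𝒞 v vs θ - 𝒞 w ws θ‖ ≤ Lc * (1 + ‖θ‖) * (‖v - w‖ + ‖vs - ws‖))
    (hgrow : ∀ v vs θ, ‖𝒞 v vs θ‖ ≤ Cc * (1 + ‖θ‖) * (‖v‖ + ‖vs‖))
    (T : ℝ) (hT : 0 < T)
    (f₁ f₂ : ℝ → Measure (Vec d))
    (h₁ : IsWeakSol 𝒞 b T f₁) (h₂ : IsWeakSol 𝒞 b T f₂)
    (h0 : f₁ 0 = f₂ 0) :
    ∀ t ∈ Set.Icc (0:ℝ) T, f₁ t = f₂ t :=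
  fun _ ht => weak_solution_uniqueness_general hmeas h₁ h₂ h0 ht

end
end
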